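/- arXiv:1212.0115 — 3 statements merged into one kernel-verified Lean document; each statement's English description precedes it below -/
import Mathlib

section
/- Let Bⁿ be the open unit ball in ℝⁿ (n ≥ 1) and let 0 < s < 1. Then for all x, y in the ball Bⁿ(s) = {w ∈ ℝⁿ : |w| < s} one has j_{Bⁿ}(x,y) ≤ k_{Bⁿ}(x,y) ≤ (1+s)·j_{Bⁿ}(x,y), where j and k are taken with respect to the unit ball Bⁿ. -/
open Set Metric

/-- The Euclidean distance from a point to the boundary of `G`. -/
noncomputable def bdist {n : ℕ} (G : Set (EuclideanSpace ℝ (Fin n)))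
    (x : EuclideanSpace ℝ (Fin n)) : ℝ :=
  Metric.infDist x (frontier G)

/-- The quasihyperbolic length of a path `γ` (parametrized on `[0,1]`) in `G`. -/
noncomputable def qhLength {n : ℕ} (G : Set (EuclideanSpace ℝ (Fin n)))
    (γ : ℝ → EuclideanSpace ℝ (Fin n)) : ℝ :=
  ∫ t in (0:ℝ)..1, ‖deriv γ t‖ / bdist G (γ t)

/-- The quasihyperbolic metric of `G`: the infimum of quasihyperbolic lengths of
paths joining `x` and `y` inside `G`. -/
noncomputable def qhDist {n : ℕ} (G : Set (EuclideanSpace ℝ (Fin n)))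
    (x y : EuclideanSpace ℝ (Fin n)) : ℝ :=
  ⨅ γ : {γ : ℝ → EuclideanSpace ℝ (Fin n) // γ 0 = x ∧ γ 1 = y ∧
      (∀ t ∈ Set.Icc (0:ℝ) 1, γ t ∈ G) ∧ ContDiffOn ℝ 1 γ (Set.Icc 0 1)},
    qhLength G γ.1

/-- The distance ratio metric of `G`. -/
noncomputable def jDist {n : ℕ} (G : Set (EuclideanSpace ℝ (Fin n)))
    (x y : EuclideanSpace ℝ (Fin n)) : ℝ :=
  Real.log (1 + dist x y / min (bdist G x) (bdist G y))

/-!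
A path in `G` that starts at `x` is, after arc length `l`, at distance at most `δ(x) + l` from the
boundary; integrating `dl / (δ(x) + l)` gives `j ≤ k`.

For the upper bound, measure the hyperbolic geodesic from `x` to `y`. Balls about the origin are
hyperbolically convex, so it stays in `B(s)`, where `1 / (1 - |z|) ≤ (1 + s) / (1 - |z|²)`. Hence
its quasihyperbolic length is at most `(1 + s) / 2` times the hyperbolic distance, which is at most
`2 j(x, y)` because `|x - y| ≤ 2 max(|x|, |y|)`. The geodesic is the stereographic image of a
hyperboloid geodesic `cosh t • p + sinh t • v`, whose height is a convex function of `t`.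
-/

section BoundaryDistance

theorem infDist_sphere_of_mem_closedBall {E : Type*} [NormedAddCommGroup E] [NormedSpace ℝ E]
    [Nontrivial E] {c z : E} {r : ℝ} (hz : z ∈ closedBall c r) :
    infDist z (sphere c r) = r - dist z c := by
  have hr : 0 ≤ r := nonempty_closedBall.1 ⟨z, hz⟩
  obtain ⟨u, hu, hzu⟩ : ∃ u : E, ‖u‖ = 1 ∧ z - c = dist z c • u := by
    rcases eq_or_ne z c with rfl | hzc
    · obtain ⟨u, hu⟩ := exists_norm_eq E zero_le_one
      exact ⟨u, hu, by simp⟩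
    · refine ⟨‖z - c‖⁻¹ • (z - c), norm_smul_inv_norm (𝕜 := ℝ) (sub_ne_zero.2 hzc), ?_⟩
      rw [dist_eq_norm, smul_inv_smul₀ (norm_ne_zero_iff.2 (sub_ne_zero.2 hzc))]
  have hu_mem : c + r • u ∈ sphere c r := by simp [norm_smul, hu, abs_of_nonneg hr]
  have hdist : dist z (c + r • u) = r - dist z c := by
    rw [dist_eq_norm, ← sub_sub, hzu, ← sub_smul, norm_smul, hu, mul_one, Real.norm_eq_abs,
      abs_sub_comm, abs_of_nonneg (sub_nonneg.2 hz)]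
  refine le_antisymm (hdist ▸ infDist_le_dist_of_mem hu_mem)
    ((le_infDist ⟨_, hu_mem⟩).2 fun w hw ↦ ?_)
  rw [← mem_sphere.1 hw, dist_comm z w]
  linarith [dist_triangle w z c]

variable {n : ℕ} {G : Set (EuclideanSpace ℝ (Fin n))}

theorem bdist_ball [NeZero n] {c z : EuclideanSpace ℝ (Fin n)} {r : ℝ} (hz : z ∈ ball c r) :
    bdist (ball c r) z = r - dist z c := by
  rw [bdist, frontier_ball c (pos_of_mem_ball hz).ne',
    infDist_sphere_of_mem_closedBall (ball_subset_closedBall hz)]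

theorem bdist_pos (hG : IsOpen G) (hGuniv : G ≠ univ) {z : EuclideanSpace ℝ (Fin n)} (hz : z ∈ G) :
    0 < bdist G z := by
  refine (isClosed_frontier.notMem_iff_infDist_pos
    (nonempty_frontier_iff.2 ⟨⟨z, hz⟩, hGuniv⟩)).1 fun hz_frontier ↦ ?_
  rw [hG.frontier_eq] at hz_frontier
  exact hz_frontier.2 hz

end BoundaryDistance

section ArcLength

variable {E : Type*} [NormedAddCommGroup E] [NormedSpace ℝ E] {f : ℝ → E} {a b : ℝ}

theorem intervalIntegrable_deriv_of_contDiffOn_Icc (hf : ContDiffOn ℝ 1 f (Icc a b))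
    (hab : a < b) : IntervalIntegrable (deriv f) MeasureTheory.volume a b := by
  have hcont := hf.continuousOn_derivWithin (uniqueDiffOn_Icc hab) le_rfl
  refine (hcont.intervalIntegrable_of_Icc hab.le).congr_uIoo fun t ht ↦ ?_
  rw [uIoo_of_le hab.le] at ht
  exact derivWithin_of_mem_nhds (Icc_mem_nhds ht.1 ht.2)

theorem continuousOn_deriv_Ioo_of_contDiffOn_Icc (hf : ContDiffOn ℝ 1 f (Icc a b)) :
    ContinuousOn (deriv f) (Ioo a b) :=
  (hf.mono Ioo_subset_Icc_self).continuousOn_deriv_of_isOpen isOpen_Ioo le_rfl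

theorem norm_sub_le_integral_norm_deriv [CompleteSpace E] (hf : ContDiffOn ℝ 1 f (Icc a b))
    (hab : a ≤ b) : ‖f b - f a‖ ≤ ∫ t in a..b, ‖deriv f t‖ := by
  rw [← intervalIntegral.integral_deriv_of_contDiffOn_Icc hf hab]
  exact intervalIntegral.norm_integral_le_integral_norm hab

theorem log_one_add_integral_div_le {v φ : ℝ → ℝ} {d : ℝ} (hab : a ≤ b) (hd : 0 < d)
    (hv_int : IntervalIntegrable v MeasureTheory.volume a b) (hv_cont : ContinuousOn v (Ioo a b))
    (hv_nonneg : ∀ t, 0 ≤ v t) (hφ_int : IntervalIntegrable φ MeasureTheory.volume a b)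
    (hφ : ∀ t ∈ Ioo a b, v t / (d + ∫ u in a..t, v u) ≤ φ t) :
    Real.log (1 + (∫ t in a..b, v t) / d) ≤ ∫ t in a..b, φ t := by
  set l : ℝ → ℝ := fun t ↦ ∫ u in a..t, v u
  have hl_cont : ContinuousOn l (Icc a b) := by
    simpa only [uIcc_of_le hab] using
      intervalIntegral.continuousOn_primitive_interval' hv_int left_mem_uIcc
  have hdl_pos : ∀ t ∈ Icc a b, 0 < d + l t := fun t ht ↦
    add_pos_of_pos_of_nonneg hd
      (intervalIntegral.integral_nonneg ht.1 fun u _ ↦ hv_nonneg u)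
  have hl_deriv : ∀ t ∈ Ioo a b, HasDerivAt l (v t) t := fun t ht ↦
    intervalIntegral.integral_hasDerivAt_right
      (hv_int.mono_set (uIcc_subset_uIcc_left (Icc_subset_uIcc (Ioo_subset_Icc_self ht))))
      (hv_cont.stronglyMeasurableAtFilter isOpen_Ioo t ht)
      (hv_cont.continuousAt (Ioo_mem_nhds ht.1 ht.2))
  have hlog := intervalIntegral.sub_le_integral_of_hasDeriv_right_of_le
    (g := fun t ↦ Real.log (d + l t)) hab
    ((continuousOn_const.add hl_cont).log fun t ht ↦ (hdl_pos t ht).ne')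
    (fun t ht ↦ (((hl_deriv t ht).const_add d).log
      (hdl_pos t (Ioo_subset_Icc_self ht)).ne').hasDerivWithinAt)
    ((intervalIntegrable_iff_integrableOn_Icc_of_le hab).1 hφ_int) hφ
  have hla : l a = 0 := intervalIntegral.integral_same
  rwa [hla, add_zero, ← Real.log_div (hdl_pos b (right_mem_Icc.2 hab)).ne' hd.ne', add_div,
    div_self hd.ne'] at hlog

end ArcLength

section Paths

variable {n : ℕ} {G : Set (EuclideanSpace ℝ (Fin n))} {x y : EuclideanSpace ℝ (Fin n)}
  {γ : ℝ → EuclideanSpace ℝ (Fin n)}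

/-- The paths over which the infimum in `qhDist G x y` is taken. It is phrased as a conjunction, so
that the subtype of such paths is the index type of that infimum by definition. -/
def IsPathIn (G : Set (EuclideanSpace ℝ (Fin n))) (x y : EuclideanSpace ℝ (Fin n))
    (γ : ℝ → EuclideanSpace ℝ (Fin n)) : Prop :=
  γ 0 = x ∧ γ 1 = y ∧ (∀ t ∈ Icc (0 : ℝ) 1, γ t ∈ G) ∧ ContDiffOn ℝ 1 γ (Icc 0 1)

theorem IsPathIn.reverse (hγ : IsPathIn G x y γ) : IsPathIn G y x fun t ↦ γ (1 - t) := by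
  obtain ⟨hγ0, hγ1, hγG, hγC⟩ := hγ
  have hmaps : MapsTo (fun t : ℝ ↦ 1 - t) (Icc 0 1) (Icc 0 1) := fun t ht ↦
    ⟨sub_nonneg.2 ht.2, sub_le_self 1 ht.1⟩
  exact ⟨by simpa using hγ1, by simpa using hγ0, fun t ht ↦ hγG _ (hmaps ht),
    hγC.comp (by fun_prop) hmaps⟩

theorem qhLength_reverse (G : Set (EuclideanSpace ℝ (Fin n))) (γ : ℝ → EuclideanSpace ℝ (Fin n)) :
    qhLength G (fun t ↦ γ (1 - t)) = qhLength G γ := by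
  simp only [qhLength, deriv_comp_const_sub, norm_neg]
  simpa using intervalIntegral.integral_comp_sub_left (a := 0) (b := 1)
    (fun t ↦ ‖deriv γ t‖ / bdist G (γ t)) 1

theorem IsPathIn.intervalIntegrable (hγ : IsPathIn G x y γ) (hG : IsOpen G) (hGuniv : G ≠ univ) :
    IntervalIntegrable (fun t ↦ ‖deriv γ t‖ / bdist G (γ t)) MeasureTheory.volume 0 1 := by
  obtain ⟨-, -, hγG, hγC⟩ := hγ
  simp only [div_eq_mul_inv]
  refine (intervalIntegrable_deriv_of_contDiffOn_Icc hγC one_pos).norm.mul_continuousOn ?_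
  rw [uIcc_of_le zero_le_one]
  exact ((continuous_infDist_pt _).comp_continuousOn hγC.continuousOn).inv₀ fun t ht ↦
    (bdist_pos hG hGuniv (hγG t ht)).ne'

theorem IsPathIn.log_one_add_dist_div_le_qhLength (hγ : IsPathIn G x y γ) (hG : IsOpen G)
    (hGuniv : G ≠ univ) : Real.log (1 + dist x y / bdist G x) ≤ qhLength G γ := by
  have hint := hγ.intervalIntegrable hG hGuniv
  obtain ⟨rfl, rfl, hγG, hγC⟩ := hγ
  have hpos : ∀ t ∈ Icc (0 : ℝ) 1, 0 < bdist G (γ t) := fun t ht ↦ bdist_pos hG hGuniv (hγG t ht)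
  have h0 : 0 < bdist G (γ 0) := hpos 0 (by simp)
  have hdist : ∀ t ∈ Icc (0 : ℝ) 1, dist (γ t) (γ 0) ≤ ∫ u in 0..t, ‖deriv γ u‖ := fun t ht ↦
    dist_eq_norm (γ t) (γ 0) ▸
      norm_sub_le_integral_norm_deriv (hγC.mono (Icc_subset_Icc_right ht.2)) ht.1
  have hbdist : ∀ t ∈ Icc (0 : ℝ) 1,
      bdist G (γ t) ≤ bdist G (γ 0) + ∫ u in 0..t, ‖deriv γ u‖ := fun t ht ↦
    infDist_le_infDist_add_dist.trans (add_le_add_right (hdist t ht) _)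
  calc Real.log (1 + dist (γ 0) (γ 1) / bdist G (γ 0))
      ≤ Real.log (1 + (∫ t in 0..1, ‖deriv γ t‖) / bdist G (γ 0)) := by
        rw [dist_comm]
        gcongr
        exact hdist 1 (by simp)
    _ ≤ qhLength G γ :=
        log_one_add_integral_div_le zero_le_one h0
          (intervalIntegrable_deriv_of_contDiffOn_Icc hγC one_pos).norm
          (continuousOn_deriv_Ioo_of_contDiffOn_Icc hγC).norm (fun _ ↦ norm_nonneg _) hint
          fun t ht ↦ div_le_div_of_nonneg_left (norm_nonneg _)
            (hpos t (Ioo_subset_Icc_self ht)) (hbdist t (Ioo_subset_Icc_self ht))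

theorem IsPathIn.jDist_le_qhLength (hγ : IsPathIn G x y γ) (hG : IsOpen G) (hGuniv : G ≠ univ) :
    jDist G x y ≤ qhLength G γ := by
  unfold jDist
  rcases min_choice (bdist G x) (bdist G y) with hmin | hmin <;> rw [hmin]
  · exact hγ.log_one_add_dist_div_le_qhLength hG hGuniv
  · rw [dist_comm, ← qhLength_reverse]
    exact hγ.reverse.log_one_add_dist_div_le_qhLength hG hGuniv

theorem IsPathIn.jDist_le_qhDist (hγ : IsPathIn G x y γ) (hG : IsOpen G) (hGuniv : G ≠ univ) :
    jDist G x y ≤ qhDist G x y :=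
  have : Nonempty {γ // IsPathIn G x y γ} := ⟨⟨γ, hγ⟩⟩
  le_ciInf (ι := {γ // IsPathIn G x y γ}) fun σ ↦ σ.2.jDist_le_qhLength hG hGuniv

theorem qhLength_nonneg (G : Set (EuclideanSpace ℝ (Fin n))) (γ : ℝ → EuclideanSpace ℝ (Fin n)) :
    0 ≤ qhLength G γ :=
  intervalIntegral.integral_nonneg zero_le_one fun _ _ ↦ div_nonneg (norm_nonneg _) infDist_nonneg

theorem qhLength_le_of_forall_le {C : ℝ}
    (hC : ∀ t ∈ Icc (0 : ℝ) 1, ‖deriv γ t‖ / bdist G (γ t) ≤ C) : qhLength G γ ≤ C := by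
  have hnorm : ∀ t ∈ uIoc (0 : ℝ) 1, ‖‖deriv γ t‖ / bdist G (γ t)‖ ≤ C := fun t ht ↦ by
    rw [uIoc_of_le zero_le_one] at ht
    exact (Real.norm_of_nonneg (div_nonneg (norm_nonneg _) infDist_nonneg)).trans_le
      (hC t (Ioc_subset_Icc_self ht))
  simpa only [qhLength, sub_zero, abs_one, mul_one] using
    (Real.le_norm_self _).trans (intervalIntegral.norm_integral_le_of_norm_le_const hnorm)

theorem IsPathIn.qhDist_le_qhLength (hγ : IsPathIn G x y γ) : qhDist G x y ≤ qhLength G γ :=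
  ciInf_le (ι := {γ // IsPathIn G x y γ}) ⟨0, forall_mem_range.2 fun σ ↦ qhLength_nonneg G σ.1⟩
    ⟨γ, hγ⟩

end Paths

section Hyperboloid

variable {E : Type*} [NormedAddCommGroup E] [InnerProductSpace ℝ E]

/-- The Lorentz form `⟪p.1, q.1⟫ - p.2 * q.2` of Minkowski space `E × ℝ`. -/
noncomputable def lorentzForm : LinearMap.BilinForm ℝ (E × ℝ) :=
  (innerₗ E).compl₁₂ (LinearMap.fst ℝ E ℝ) (LinearMap.fst ℝ E ℝ) -
    (LinearMap.mul ℝ ℝ).compl₁₂ (LinearMap.snd ℝ E ℝ) (LinearMap.snd ℝ E ℝ)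

theorem lorentzForm_apply (p q : E × ℝ) : lorentzForm p q = inner ℝ p.1 q.1 - p.2 * q.2 := rfl

theorem lorentzForm_self (p : E × ℝ) : lorentzForm p p = ‖p.1‖ ^ 2 - p.2 ^ 2 := by
  rw [lorentzForm_apply, real_inner_self_eq_norm_sq, sq p.2]

theorem lorentzForm_comm (p q : E × ℝ) : lorentzForm p q = lorentzForm q p := by
  rw [lorentzForm_apply, lorentzForm_apply, real_inner_comm, mul_comm]

variable (E) in
/-- The hyperboloid model of hyperbolic space: the upper sheet of unit timelike vectors. -/
def hyperboloid : Set (E × ℝ) :=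
  {p | lorentzForm p p = -1 ∧ 0 < p.2}

/-- The curve `cosh t • p + sinh t • v`: when `p` is on the hyperboloid and `v` is a unit tangent
vector there, it is the hyperbolic geodesic issuing from `p` in the direction `v`. -/
noncomputable def hyperbolicLine (p v : E × ℝ) (t : ℝ) : E × ℝ :=
  Real.cosh t • p + Real.sinh t • v

variable {p q v : E × ℝ}

theorem hyperbolicLine_zero (p v : E × ℝ) : hyperbolicLine p v 0 = p := by
  simp [hyperbolicLine]

theorem hasDerivAt_hyperbolicLine (p v : E × ℝ) (t : ℝ) :
    HasDerivAt (hyperbolicLine p v) (hyperbolicLine v p t) t := by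
  rw [hyperbolicLine, add_comm]
  exact ((Real.hasDerivAt_cosh t).smul_const p).add ((Real.hasDerivAt_sinh t).smul_const v)

theorem contDiff_hyperbolicLine (p v : E × ℝ) {m : WithTop ℕ∞} :
    ContDiff ℝ m (hyperbolicLine p v) :=
  (Real.contDiff_cosh.smul contDiff_const).add (Real.contDiff_sinh.smul contDiff_const)

theorem lorentzForm_hyperbolicLine_self (hpp : lorentzForm p p = -1) (hpv : lorentzForm p v = 0)
    (hvv : lorentzForm v v = 1) (t : ℝ) :
    lorentzForm (hyperbolicLine p v t) (hyperbolicLine p v t) = -1 := by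
  simp only [hyperbolicLine, map_add, map_smul, LinearMap.add_apply, LinearMap.smul_apply,
    smul_eq_mul, lorentzForm_comm v p, hpp, hpv, hvv]
  linear_combination -Real.cosh_sq t

theorem lorentzForm_hyperbolicLine_deriv (hpp : lorentzForm p p = -1) (hpv : lorentzForm p v = 0)
    (hvv : lorentzForm v v = 1) (t : ℝ) :
    lorentzForm (hyperbolicLine p v t) (hyperbolicLine v p t) = 0 := by
  simp only [hyperbolicLine, map_add, map_smul, LinearMap.add_apply, LinearMap.smul_apply,
    smul_eq_mul, lorentzForm_comm v p, hpp, hpv, hvv]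
  ring

theorem lorentzForm_hyperbolicLine_deriv_self (hpp : lorentzForm p p = -1)
    (hpv : lorentzForm p v = 0) (hvv : lorentzForm v v = 1) (t : ℝ) :
    lorentzForm (hyperbolicLine v p t) (hyperbolicLine v p t) = 1 := by
  simp only [hyperbolicLine, map_add, map_smul, LinearMap.add_apply, LinearMap.smul_apply,
    smul_eq_mul, lorentzForm_comm v p, hpp, hpv, hvv]
  linear_combination Real.cosh_sq t

theorem abs_snd_lt_of_lorentzForm_eq_zero (hp : p ∈ hyperboloid E) (hpv : lorentzForm p v = 0)
    (hvv : lorentzForm v v = 1) : |v.2| < p.2 := by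
  obtain ⟨hpp, hp_pos⟩ := hp
  rw [lorentzForm_self] at hpp hvv
  rw [lorentzForm_apply, sub_eq_zero] at hpv
  have hcs : (p.2 * v.2) ^ 2 ≤ (p.2 ^ 2 - 1) * (v.2 ^ 2 + 1) :=
    calc (p.2 * v.2) ^ 2 = inner ℝ p.1 v.1 ^ 2 := by rw [hpv]
      _ ≤ (‖p.1‖ * ‖v.1‖) ^ 2 := sq_le_sq.2 <| by
        simpa only [abs_mul, abs_norm] using abs_real_inner_le_norm p.1 v.1
      _ = (p.2 ^ 2 - 1) * (v.2 ^ 2 + 1) := by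
        rw [mul_pow, ← eq_add_of_sub_eq' hvv, eq_add_of_sub_eq hpp]
        ring
  exact abs_lt_of_sq_lt_sq (by linarith) hp_pos.le

theorem snd_hyperbolicLine_eq_exp (p v : E × ℝ) (t : ℝ) :
    (hyperbolicLine p v t).2 =
      (p.2 + v.2) / 2 * Real.exp t + (p.2 - v.2) / 2 * Real.exp (-t) := by
  simp only [hyperbolicLine, Prod.snd_add, Prod.smul_snd, smul_eq_mul, Real.cosh_eq, Real.sinh_eq]
  ring

theorem hyperbolicLine_mem_hyperboloid (hp : p ∈ hyperboloid E) (hpv : lorentzForm p v = 0)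
    (hvv : lorentzForm v v = 1) (t : ℝ) : hyperbolicLine p v t ∈ hyperboloid E := by
  obtain ⟨hneg, hlt⟩ := abs_lt.1 (abs_snd_lt_of_lorentzForm_eq_zero hp hpv hvv)
  have hadd_pos : 0 < (p.2 + v.2) / 2 := by linarith
  have hsub_pos : 0 < (p.2 - v.2) / 2 := by linarith
  refine ⟨lorentzForm_hyperbolicLine_self hp.1 hpv hvv t, ?_⟩
  rw [snd_hyperbolicLine_eq_exp]
  exact add_pos (mul_pos hadd_pos (Real.exp_pos t)) (mul_pos hsub_pos (Real.exp_pos (-t)))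

theorem convexOn_snd_hyperbolicLine (hv : |v.2| ≤ p.2) :
    ConvexOn ℝ univ fun t ↦ (hyperbolicLine p v t).2 := by
  obtain ⟨hneg, hle⟩ := abs_le.1 hv
  have hexp_neg : ConvexOn ℝ univ fun t : ℝ ↦ Real.exp (-t) :=
    convexOn_exp.comp_linearMap (-LinearMap.id)
  simp only [snd_hyperbolicLine_eq_exp]
  exact (convexOn_exp.smul (by linarith)).add (hexp_neg.smul (by linarith))

theorem snd_hyperbolicLine_le_max {ρ t : ℝ} (hv : |v.2| ≤ p.2) (ht : t ∈ Icc 0 ρ) :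
    (hyperbolicLine p v t).2 ≤ max p.2 (hyperbolicLine p v ρ).2 := by
  have hseg : t ∈ segment ℝ 0 ρ := segment_eq_Icc (ht.1.trans ht.2) ▸ ht
  simpa only [hyperbolicLine_zero] using
    (convexOn_snd_hyperbolicLine hv).le_on_segment (mem_univ _) (mem_univ _) hseg

theorem exists_hyperbolicLine_eq {ρ : ℝ} (hρ : ρ ≠ 0) (hpp : lorentzForm p p = -1)
    (hqq : lorentzForm q q = -1) (hpq : lorentzForm p q = -Real.cosh ρ) :
    ∃ v, lorentzForm p v = 0 ∧ lorentzForm v v = 1 ∧ hyperbolicLine p v ρ = q := by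
  have hsinh : Real.sinh ρ ≠ 0 := Real.sinh_ne_zero.2 hρ
  refine ⟨(Real.sinh ρ)⁻¹ • (q - Real.cosh ρ • p), ?_, ?_, ?_⟩
  · simp [hpp, hpq]
  · simp only [map_smul, map_sub, LinearMap.smul_apply, LinearMap.sub_apply, smul_eq_mul,
      lorentzForm_comm q p, hpp, hqq, hpq]
    field_simp
    linear_combination Real.cosh_sq ρ
  · rw [hyperbolicLine, smul_inv_smul₀ hsinh, add_sub_cancel]

end Hyperboloid

section HyperbolicDistance

variable {E : Type*} [NormedAddCommGroup E] {x y : E}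

/-- The hyperbolic distance of the unit ball with its metric `2 |dz| / (1 - |z|²)` of curvature
`-1`. -/
noncomputable def ballHypDist (x y : E) : ℝ :=
  2 * Real.arsinh (dist x y / √((1 - ‖x‖ ^ 2) * (1 - ‖y‖ ^ 2)))

theorem one_sub_norm_sq_pos (hx : ‖x‖ < 1) : 0 < 1 - ‖x‖ ^ 2 :=
  sub_pos.2 (pow_lt_one₀ (norm_nonneg x) hx two_ne_zero)

theorem ballHypDist_self (x : E) : ballHypDist x x = 0 := by
  simp [ballHypDist]

theorem ballHypDist_comm (x y : E) : ballHypDist x y = ballHypDist y x := by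
  rw [ballHypDist, ballHypDist, dist_comm, mul_comm (1 - ‖x‖ ^ 2)]

theorem ballHypDist_nonneg (x y : E) : 0 ≤ ballHypDist x y :=
  mul_nonneg zero_le_two (Real.arsinh_nonneg_iff.2 (by positivity))

theorem ballHypDist_pos (hx : ‖x‖ < 1) (hy : ‖y‖ < 1) (hxy : x ≠ y) : 0 < ballHypDist x y := by
  have hx_pos := one_sub_norm_sq_pos hx
  have hy_pos := one_sub_norm_sq_pos hy
  have hdist := dist_pos.2 hxy
  exact mul_pos two_pos (Real.arsinh_pos_iff.2 (by positivity))

theorem div_one_sub_sq_le_sinh_log {a d : ℝ} (ha : a < 1) (hd : 0 ≤ d) (hda : d ≤ 2 * a) :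
    d / (1 - a ^ 2) ≤ Real.sinh (Real.log (1 + d / (1 - a))) := by
  have hsub : 0 < 1 - a := sub_pos.2 ha
  have hadd : 0 < 1 + a := by linarith
  have hsinh : Real.sinh (Real.log (1 + d / (1 - a))) =
      d * (2 * (1 - a) + d) / (2 * (1 - a) * (1 - a + d)) := by
    have : 0 < 1 - a + d := by positivity
    rw [Real.sinh_log (by positivity)]
    field_simp
    ring
  have hfactor : 2 * (1 - a + d) ≤ (1 + a) * (2 * (1 - a) + d) := by
    linarith [mul_nonneg hsub.le (sub_nonneg.2 hda)]
  rw [hsinh, show 1 - a ^ 2 = (1 - a) * (1 + a) by ring,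
    div_le_div_iff₀ (by positivity) (by positivity)]
  linarith [mul_le_mul_of_nonneg_left hfactor (mul_nonneg hd hsub.le)]

theorem ballHypDist_le_two_mul_log (hx : ‖x‖ < 1) (hyx : ‖y‖ ≤ ‖x‖) :
    ballHypDist x y ≤ 2 * Real.log (1 + dist x y / (1 - ‖x‖)) := by
  have hx_pos := one_sub_norm_sq_pos hx
  have hdist : dist x y ≤ 2 * ‖x‖ := by linarith [dist_le_norm_add_norm x y]
  have hsqrt : 1 - ‖x‖ ^ 2 ≤ √((1 - ‖x‖ ^ 2) * (1 - ‖y‖ ^ 2)) := by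
    refine Real.le_sqrt_of_sq_le ?_
    rw [sq]
    gcongr
  rw [ballHypDist, mul_le_mul_iff_right₀ two_pos, ← Real.sinh_le_sinh, Real.sinh_arsinh]
  calc dist x y / √((1 - ‖x‖ ^ 2) * (1 - ‖y‖ ^ 2)) ≤ dist x y / (1 - ‖x‖ ^ 2) := by gcongr
    _ ≤ Real.sinh (Real.log (1 + dist x y / (1 - ‖x‖))) :=
      div_one_sub_sq_le_sinh_log hx dist_nonneg hdist

end HyperbolicDistance

section PoincareBall

variable {E : Type*} [NormedAddCommGroup E] [InnerProductSpace ℝ E] {x y : E} {p q : E × ℝ}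

/-- Stereographic projection of the hyperboloid from `(0, -1)` onto the unit ball. -/
noncomputable def ballProj (p : E × ℝ) : E :=
  (1 + p.2)⁻¹ • p.1

/-- The inverse of `ballProj`, from the unit ball to the hyperboloid. -/
noncomputable def ballLift (x : E) : E × ℝ :=
  ((2 / (1 - ‖x‖ ^ 2)) • x, (1 + ‖x‖ ^ 2) / (1 - ‖x‖ ^ 2))

theorem ballLift_mem_hyperboloid (hx : ‖x‖ < 1) : ballLift x ∈ hyperboloid E := by
  have hpos := one_sub_norm_sq_pos hx
  refine ⟨?_, by simp only [ballLift]; positivity⟩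
  rw [lorentzForm_self, ballLift, norm_smul, mul_pow, Real.norm_eq_abs, sq_abs]
  field_simp
  ring

theorem ballProj_ballLift (hx : ‖x‖ < 1) : ballProj (ballLift x) = x := by
  have hpos := one_sub_norm_sq_pos hx
  have hscale : (1 + (1 + ‖x‖ ^ 2) / (1 - ‖x‖ ^ 2))⁻¹ * (2 / (1 - ‖x‖ ^ 2)) = 1 := by
    field_simp
    norm_num
  rw [ballProj, ballLift, smul_smul, hscale, one_smul]

theorem lorentzForm_ballLift (hx : ‖x‖ < 1) (hy : ‖y‖ < 1) :
    lorentzForm (ballLift x) (ballLift y) = -Real.cosh (ballHypDist x y) := by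
  have hx_pos := one_sub_norm_sq_pos hx
  have hy_pos := one_sub_norm_sq_pos hy
  rw [ballHypDist, Real.cosh_two_mul, Real.cosh_sq, Real.sinh_arsinh, div_pow,
    Real.sq_sqrt (by positivity), lorentzForm_apply, ballLift, ballLift, real_inner_smul_left,
    real_inner_smul_right, dist_eq_norm, norm_sub_sq_real]
  field_simp
  ring

theorem one_sub_norm_ballProj_sq (hp : p ∈ hyperboloid E) :
    1 - ‖ballProj p‖ ^ 2 = 2 / (1 + p.2) := by
  obtain ⟨hpp, hp_pos⟩ := hp
  rw [lorentzForm_self, sub_eq_iff_eq_add] at hpp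
  rw [ballProj, norm_smul, mul_pow, hpp, Real.norm_eq_abs, sq_abs]
  field_simp
  ring

theorem norm_ballProj_le_norm_ballProj (hp : p ∈ hyperboloid E) (hq : q ∈ hyperboloid E)
    (hpq : p.2 ≤ q.2) : ‖ballProj p‖ ≤ ‖ballProj q‖ := by
  have hp_pos := hp.2
  have hle : 2 / (1 + q.2) ≤ 2 / (1 + p.2) := by gcongr
  rw [← one_sub_norm_ballProj_sq hp, ← one_sub_norm_ballProj_sq hq] at hle
  exact (sq_le_sq₀ (norm_nonneg _) (norm_nonneg _)).1 (by linarith)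

theorem hasDerivAt_ballProj_comp {c : ℝ → E × ℝ} {c' : E × ℝ} {t : ℝ} (hc : HasDerivAt c c' t)
    (hct : 1 + (c t).2 ≠ 0) :
    HasDerivAt (fun s ↦ ballProj (c s))
      ((1 + (c t).2)⁻¹ • c'.1 - (c'.2 / (1 + (c t).2) ^ 2) • (c t).1) t := by
  have hsnd : HasDerivAt (fun s ↦ 1 + (c s).2) c'.2 t := hc.snd.const_add 1
  have hfst : HasDerivAt (fun s ↦ (c s).1) c'.1 t := hc.fst
  have hproj : HasDerivAt (fun s ↦ ballProj (c s)) _ t := (hsnd.inv hct).smul hfst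
  exact hproj.congr_deriv (by simp [neg_div, sub_eq_add_neg])

-- Stereographic projection carries the Lorentz metric to `2 |dz| / (1 - |z|²)`.
theorem norm_deriv_ballProj_comp {c : ℝ → E × ℝ} {c' : E × ℝ} {t : ℝ} (hc : HasDerivAt c c' t)
    (hct : c t ∈ hyperboloid E) (horth : lorentzForm (c t) c' = 0) :
    ‖deriv (fun s ↦ ballProj (c s)) t‖ =
      √(lorentzForm c' c') / 2 * (1 - ‖ballProj (c t)‖ ^ 2) := by
  have hpos : 0 < 1 + (c t).2 := add_pos one_pos hct.2
  have hnorm : ‖(c t).1‖ ^ 2 = (c t).2 ^ 2 - 1 := by linarith [lorentzForm_self (c t) ▸ hct.1]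
  have hinner : inner ℝ c'.1 (c t).1 = (c t).2 * c'.2 := by
    rw [real_inner_comm, ← sub_eq_zero, ← horth, lorentzForm_apply]
  have hsq : ‖deriv (fun s ↦ ballProj (c s)) t‖ ^ 2 = lorentzForm c' c' / (1 + (c t).2) ^ 2 := by
    rw [(hasDerivAt_ballProj_comp hc hpos.ne').deriv, norm_sub_sq_real, norm_smul, norm_smul,
      mul_pow, mul_pow, hnorm, real_inner_smul_left, real_inner_smul_right, hinner,
      lorentzForm_self, Real.norm_eq_abs, Real.norm_eq_abs, sq_abs, sq_abs]
    field_simp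
    ring
  rw [one_sub_norm_ballProj_sq hct, ← Real.sqrt_sq (norm_nonneg (deriv _ t)), hsq,
    Real.sqrt_div' _ (sq_nonneg _), Real.sqrt_sq hpos.le]
  field_simp

theorem contDiffOn_ballProj {m : WithTop ℕ∞} : ContDiffOn ℝ m ballProj (hyperboloid E) :=
  ((contDiff_const.add contDiff_snd).contDiffOn.inv fun _ hp ↦
    (add_pos one_pos hp.2).ne').smul contDiff_fst.contDiffOn

theorem exists_hyperbolic_geodesic (hx : ‖x‖ < 1) (hy : ‖y‖ < 1) :
    ∃ γ : ℝ → E, ContDiff ℝ 1 γ ∧ γ 0 = x ∧ γ 1 = y ∧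
      (∀ t ∈ Icc (0 : ℝ) 1, ‖γ t‖ ≤ max ‖x‖ ‖y‖) ∧
      ∀ t, ‖deriv γ t‖ = ballHypDist x y / 2 * (1 - ‖γ t‖ ^ 2) := by
  rcases eq_or_ne x y with rfl | hxy
  · exact ⟨fun _ ↦ x, contDiff_const, rfl, rfl, by simp, by simp [ballHypDist_self]⟩
  set ρ := ballHypDist x y
  have hρ : 0 < ρ := ballHypDist_pos hx hy hxy
  have hX := ballLift_mem_hyperboloid hx
  have hY := ballLift_mem_hyperboloid hy
  obtain ⟨v, hXv, hvv, hline⟩ :=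
    exists_hyperbolicLine_eq hρ.ne' hX.1 hY.1 (lorentzForm_ballLift hx hy)
  set c : ℝ → E × ℝ := fun t ↦ hyperbolicLine (ballLift x) v (t * ρ)
  have hc_mem : ∀ t, c t ∈ hyperboloid E := fun t ↦ hyperbolicLine_mem_hyperboloid hX hXv hvv _
  have hc_deriv : ∀ t, HasDerivAt c (ρ • hyperbolicLine v (ballLift x) (t * ρ)) t := fun t ↦
    HasDerivAt.scomp (h := fun t ↦ t * ρ) t (hasDerivAt_hyperbolicLine (ballLift x) v (t * ρ))
      (hasDerivAt_mul_const ρ)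
  have hγ0 : ballProj (c 0) = x := by
    simp only [c, zero_mul, hyperbolicLine_zero, ballProj_ballLift hx]
  have hγ1 : ballProj (c 1) = y := by simp only [c, one_mul, hline, ballProj_ballLift hy]
  refine ⟨fun t ↦ ballProj (c t), ?_, hγ0, hγ1, fun t ht ↦ ?_, fun t ↦ ?_⟩
  · exact contDiffOn_ballProj.comp_contDiff
      ((contDiff_hyperbolicLine _ _).comp (contDiff_id.mul contDiff_const)) hc_mem
  · have hle := snd_hyperbolicLine_le_max (abs_snd_lt_of_lorentzForm_eq_zero hX hXv hvv).le
      (show t * ρ ∈ Icc 0 ρ from ⟨mul_nonneg ht.1 hρ.le, mul_le_of_le_one_left hρ.le ht.2⟩)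
    rw [hline] at hle
    rcases le_max_iff.1 hle with hle | hle
    · exact ballProj_ballLift hx ▸
        le_max_of_le_left (norm_ballProj_le_norm_ballProj (hc_mem t) hX hle)
    · exact ballProj_ballLift hy ▸
        le_max_of_le_right (norm_ballProj_le_norm_ballProj (hc_mem t) hY hle)
  · rw [norm_deriv_ballProj_comp (hc_deriv t) (hc_mem t)]
    · simp only [map_smul, LinearMap.smul_apply, smul_eq_mul,
        lorentzForm_hyperbolicLine_deriv_self hX.1 hXv hvv, mul_one, Real.sqrt_mul_self hρ.le]
    · rw [map_smul, lorentzForm_hyperbolicLine_deriv hX.1 hXv hvv, smul_zero]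

end PoincareBall

section UnitBall

variable {n : ℕ} [NeZero n] {x y : EuclideanSpace ℝ (Fin n)}

theorem ball_ne_univ {E : Type*} [NormedAddCommGroup E] [NormedSpace ℝ E] [Nontrivial E]
    (c : E) (r : ℝ) : ball c r ≠ univ := fun h ↦
  NormedSpace.unbounded_univ ℝ E (h ▸ isBounded_ball)

theorem ballHypDist_le_two_mul_jDist (hx : x ∈ ball 0 1) (hy : y ∈ ball 0 1) :
    ballHypDist x y ≤ 2 * jDist (ball 0 1) x y := by
  rw [jDist, bdist_ball hx, bdist_ball hy, dist_zero_right, dist_zero_right]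
  rw [mem_ball_zero_iff] at hx hy
  rcases le_total ‖y‖ ‖x‖ with hyx | hxy
  · rw [min_eq_left (by linarith)]
    exact ballHypDist_le_two_mul_log hx hyx
  · rw [min_eq_right (by linarith), ballHypDist_comm, dist_comm]
    exact ballHypDist_le_two_mul_log hy hxy

theorem qhLength_unitBall_le {γ : ℝ → EuclideanSpace ℝ (Fin n)} {r ℓ : ℝ} (hr : r < 1)
    (hℓ : 0 ≤ ℓ) (hγr : ∀ t ∈ Icc (0 : ℝ) 1, ‖γ t‖ ≤ r)
    (hγℓ : ∀ t ∈ Icc (0 : ℝ) 1, ‖deriv γ t‖ = ℓ / 2 * (1 - ‖γ t‖ ^ 2)) :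
    qhLength (ball 0 1) γ ≤ (1 + r) / 2 * ℓ := by
  refine qhLength_le_of_forall_le fun t ht ↦ ?_
  have hpos : 0 < 1 - ‖γ t‖ := sub_pos.2 ((hγr t ht).trans_lt hr)
  rw [bdist_ball (mem_ball_zero_iff.2 (sub_pos.1 hpos)), dist_zero_right, div_le_iff₀ hpos]
  calc ‖deriv γ t‖ = (1 + ‖γ t‖) / 2 * ℓ * (1 - ‖γ t‖) := by rw [hγℓ t ht]; ring
    _ ≤ (1 + r) / 2 * ℓ * (1 - ‖γ t‖) := by gcongr; exact hγr t ht

theorem exists_isPathIn_unitBall_qhLength_le {r : ℝ} (hr : r < 1) (hx : ‖x‖ ≤ r) (hy : ‖y‖ ≤ r) :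
    ∃ γ, IsPathIn (ball 0 1) x y γ ∧
      qhLength (ball 0 1) γ ≤ (1 + r) / 2 * ballHypDist x y := by
  obtain ⟨γ, hγC, hγ0, hγ1, hγ_norm, hγ_deriv⟩ :=
    exists_hyperbolic_geodesic (hx.trans_lt hr) (hy.trans_lt hr)
  have hγr : ∀ t ∈ Icc (0 : ℝ) 1, ‖γ t‖ ≤ r := fun t ht ↦ (hγ_norm t ht).trans (max_le hx hy)
  exact ⟨γ, ⟨hγ0, hγ1, fun t ht ↦ mem_ball_zero_iff.2 ((hγr t ht).trans_lt hr), hγC.contDiffOn⟩,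
    qhLength_unitBall_le hr (ballHypDist_nonneg x y) hγr fun t _ ↦ hγ_deriv t⟩

end UnitBall

theorem stmt_3 (n : ℕ) (hn : 1 ≤ n) (s : ℝ) (hs0 : 0 < s) (hs1 : s < 1)
    (x y : EuclideanSpace ℝ (Fin n))
    (hx : x ∈ Metric.ball (0 : EuclideanSpace ℝ (Fin n)) s)
    (hy : y ∈ Metric.ball (0 : EuclideanSpace ℝ (Fin n)) s) :
    jDist (Metric.ball (0 : EuclideanSpace ℝ (Fin n)) 1) x y ≤
      qhDist (Metric.ball (0 : EuclideanSpace ℝ (Fin n)) 1) x y ∧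
    qhDist (Metric.ball (0 : EuclideanSpace ℝ (Fin n)) 1) x y ≤
      (1 + s) * jDist (Metric.ball (0 : EuclideanSpace ℝ (Fin n)) 1) x y := by
  have : NeZero n := ⟨by omega⟩
  have hxs : ‖x‖ ≤ s := (mem_ball_zero_iff.1 hx).le
  have hys : ‖y‖ ≤ s := (mem_ball_zero_iff.1 hy).le
  obtain ⟨γ, hγ, hlength⟩ := exists_isPathIn_unitBall_qhLength_le hs1 hxs hys
  refine ⟨hγ.jDist_le_qhDist isOpen_ball (ball_ne_univ 0 1), ?_⟩
  have hhyp : ballHypDist x y ≤ 2 * jDist (ball 0 1) x y :=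
    ballHypDist_le_two_mul_jDist (ball_subset_ball hs1.le hx) (ball_subset_ball hs1.le hy)
  calc qhDist (ball 0 1) x y ≤ qhLength (ball 0 1) γ := hγ.qhDist_le_qhLength
    _ ≤ (1 + s) / 2 * ballHypDist x y := hlength
    _ ≤ (1 + s) / 2 * (2 * jDist (ball 0 1) x y) := by gcongr
    _ = (1 + s) * jDist (ball 0 1) x y := by ring
end

section
/- Let n ≥ 2, let G = ℝⁿ \ {0}, and let x, y, z ∈ G satisfy k_G(x,z) = k_G(y,z) and |z| ≤ |x|, |z| ≤ |y|. If the angle ∠(x, z, 0) is strictly smaller than the angle ∠(y, z, 0), then |x − z| < |y − z|. -/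
open Set Metric

/-!
In logarithmic polar coordinates `(log ‖x‖, x / ‖x‖)` the quasihyperbolic metric of `ℝⁿ \ {0}` is
the product metric of the cylinder `ℝ × Sⁿ⁻¹`. Its geodesics are logarithmic spirals, images of
`t ↦ exp (t c)` under conformal linear maps `ℂ → ℝⁿ`, and this gives the Martin–Osgood formula
`k(x, z)² = α(x)² + L(x)²` with `α(x) = ∠(x, 0, z)` and `L(x) = log (‖x‖ / ‖z‖)`.

So suppose `α(x)² + L(x)² = α(y)² + L(y)²`. If `‖y‖ ≤ ‖x‖`, then `α(x) ≤ α(y)`, and moving away from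
the origin while closing the angle at the origin can only widen the angle at `z`, against the
hypothesis. Hence `‖x‖ < ‖y‖` and `α(y) ≤ α(x)`, and the distances are compared through
`‖x - z‖² = 2 ‖x‖ ‖z‖ (cosh L(x) - cos α(x))`: the increase of `cosh` between the two points is at
least half the increase of `L²`, while the increase of `cos` is at most half the decrease of `α²`.
-/

section RealInequalities

lemma sq_sub_sq_div_two_le_cosh_sub_cosh {a b : ℝ} (ha : 0 ≤ a) (hab : a ≤ b) :
    (b ^ 2 - a ^ 2) / 2 ≤ Real.cosh b - Real.cosh a := by
  obtain ⟨u, v, rfl, rfl⟩ : ∃ u v, b = u + v ∧ a = u - v :=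
    ⟨(b + a) / 2, (b - a) / 2, by ring, by ring⟩
  have hu : u ≤ Real.sinh u := Real.self_le_sinh_iff.2 (by linarith)
  have hv : v ≤ Real.sinh v := Real.self_le_sinh_iff.2 (by linarith)
  calc ((u + v) ^ 2 - (u - v) ^ 2) / 2 = 2 * (u * v) := by ring
    _ ≤ 2 * (Real.sinh u * Real.sinh v) := by gcongr <;> linarith
    _ = Real.cosh (u + v) - Real.cosh (u - v) := by rw [Real.cosh_add, Real.cosh_sub]; ring

lemma cos_sub_cos_le_sq_sub_sq_div_two {a b : ℝ} (hb : 0 ≤ b) (hba : b ≤ a) :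
    Real.cos b - Real.cos a ≤ (a ^ 2 - b ^ 2) / 2 := by
  obtain ⟨u, v, rfl, rfl⟩ : ∃ u v, a = u + v ∧ b = u - v :=
    ⟨(a + b) / 2, (a - b) / 2, by ring, by ring⟩
  have hu : 0 ≤ u := by linarith
  have hv : 0 ≤ v := by linarith
  have hsin : Real.sin u * Real.sin v ≤ u * v :=
    calc Real.sin u * Real.sin v ≤ |Real.sin u| * |Real.sin v| := by
          rw [← abs_mul]; exact le_abs_self _
      _ ≤ |u| * |v| :=
        mul_le_mul Real.abs_sin_le_abs Real.abs_sin_le_abs (abs_nonneg _) (abs_nonneg _)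
      _ = u * v := by rw [abs_of_nonneg hu, abs_of_nonneg hv]
  rw [Real.cos_sub, Real.cos_add]
  linarith

lemma one_add_sq_div_two_le_cosh (t : ℝ) : 1 + t ^ 2 / 2 ≤ Real.cosh t := by
  have h := sq_sub_sq_div_two_le_cosh_sub_cosh le_rfl (abs_nonneg t)
  rw [sq_abs, Real.cosh_abs, Real.cosh_zero] at h
  linarith

lemma cos_le_one_sub_sq_mul_one_sub_sq_div_two (t : ℝ) :
    Real.cos t ≤ 1 - t ^ 2 * (1 - t ^ 2) / 2 := by
  rcases le_total |t| 1 with ht | ht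
  · have h := (abs_le.1 (Real.cos_bound ht)).2
    rw [Even.pow_abs (by decide)] at h
    nlinarith [sq_nonneg (t ^ 2)]
  · have h : 1 ≤ t ^ 2 := (one_le_sq_iff_one_le_abs t).2 ht
    nlinarith [Real.cos_le_one t]

lemma sin_add_le_sin_add_sin {s t : ℝ} (hs : 0 ≤ Real.sin s) (ht : 0 ≤ Real.sin t) :
    Real.sin (s + t) ≤ Real.sin s + Real.sin t := by
  rw [Real.sin_add]
  nlinarith [Real.cos_le_one s, Real.cos_le_one t]

end RealInequalities

section LogPolar

open InnerProductGeometry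

variable {V : Type*} [NormedAddCommGroup V] [InnerProductSpace ℝ V] {x y z : V}

/-- The distance between two nonzero vectors in the product metric of `ℝ × S` (`S` the unit sphere
with its angular metric), read in the coordinates `(log ‖x‖, x / ‖x‖)`: the right-hand side of the
Martin–Osgood formula. -/
noncomputable def logPolarDist (x y : V) : ℝ :=
  √((Real.log ‖x‖ - Real.log ‖y‖) ^ 2 + angle x y ^ 2)

lemma logPolarDist_sq (x y : V) :
    logPolarDist x y ^ 2 = (Real.log ‖x‖ - Real.log ‖y‖) ^ 2 + angle x y ^ 2 :=
  Real.sq_sqrt (by positivity)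

lemma logPolarDist_nonneg (x y : V) : 0 ≤ logPolarDist x y :=
  Real.sqrt_nonneg _

lemma logPolarDist_self (hx : x ≠ 0) : logPolarDist x x = 0 := by
  simp [logPolarDist, angle_self hx]

lemma logPolarDist_eq_zero_iff (hx : x ≠ 0) (hy : y ≠ 0) : logPolarDist x y = 0 ↔ x = y := by
  refine ⟨fun h => ?_, fun h => h ▸ logPolarDist_self hx⟩
  have hsq := logPolarDist_sq x y
  rw [h] at hsq
  have hangle : angle x y = 0 := by nlinarith
  have hlog : Real.log ‖x‖ = Real.log ‖y‖ := by nlinarith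
  exact eq_of_angle_eq_zero_of_norm_eq hangle
    (Real.log_injOn_pos (norm_pos_iff.2 hx) (norm_pos_iff.2 hy) hlog)

lemma logPolarDist_triangle (x y z : V) :
    logPolarDist x z ≤ logPolarDist x y + logPolarDist y z := by
  simp only [logPolarDist, ← Complex.norm_add_mul_I]
  refine le_trans ?_ (norm_add_le _ _)
  have hsum : ∀ a b c d : ℝ, (a + b * Complex.I + (c + d * Complex.I) : ℂ)
      = (a + c : ℝ) + (b + d : ℝ) * Complex.I := by intros; push_cast; ring
  rw [hsum, Complex.norm_add_mul_I, Complex.norm_add_mul_I, sub_add_sub_cancel]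
  gcongr
  · exact angle_nonneg x z
  · exact angle_le_angle_add_angle x y z

lemma continuousAt_angle_right (hx : x ≠ 0) (hy : y ≠ 0) : ContinuousAt (angle x) y :=
  (continuousAt_angle (x := (x, y)) hx hy).comp (f := fun w => (x, w)) (by fun_prop)

lemma continuousAt_logPolarDist_right (hx : x ≠ 0) (hy : y ≠ 0) :
    ContinuousAt (logPolarDist x) y := by
  have hlog : ContinuousAt (fun w : V => Real.log ‖w‖) y :=
    continuousAt_id.norm.log (norm_ne_zero_iff.2 hy)
  exact (((continuousAt_const.sub hlog).pow 2).add ((continuousAt_angle_right hx hy).pow 2)).sqrt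

lemma norm_sub_sq_eq_cosh_sub_cos (hx : x ≠ 0) (hy : y ≠ 0) :
    ‖x - y‖ ^ 2 = 2 * ‖x‖ * ‖y‖ *
      (Real.cosh (Real.log ‖x‖ - Real.log ‖y‖) - Real.cos (angle x y)) := by
  have hx' : 0 < ‖x‖ := norm_pos_iff.2 hx
  have hy' : 0 < ‖y‖ := norm_pos_iff.2 hy
  rw [sq, norm_sub_sq_eq_norm_sq_add_norm_sq_sub_two_mul_norm_mul_norm_mul_cos_angle,
    ← Real.log_div hx'.ne' hy'.ne', Real.cosh_log (div_pos hx' hy')]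
  field_simp

/-- As `y → x` this says that `logPolarDist x y` is asymptotically at most `‖x - y‖ / ‖x‖`. -/
lemma mul_logPolarDist_sq_le_norm_sub_sq (hx : x ≠ 0) (hy : y ≠ 0) :
    (1 - angle x y ^ 2) * (‖x‖ * ‖y‖) * logPolarDist x y ^ 2 ≤ ‖x - y‖ ^ 2 := by
  rw [logPolarDist_sq, norm_sub_sq_eq_cosh_sub_cos hx hy]
  set L := Real.log ‖x‖ - Real.log ‖y‖
  set α := angle x y
  have hcosh := one_add_sq_div_two_le_cosh L
  have hcos := cos_le_one_sub_sq_mul_one_sub_sq_div_two α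
  have key : (1 - α ^ 2) * (L ^ 2 + α ^ 2) ≤ 2 * (Real.cosh L - Real.cos α) := by
    nlinarith [mul_nonneg (sq_nonneg α) (sq_nonneg L)]
  calc (1 - α ^ 2) * (‖x‖ * ‖y‖) * (L ^ 2 + α ^ 2)
      = ‖x‖ * ‖y‖ * ((1 - α ^ 2) * (L ^ 2 + α ^ 2)) := by ring
    _ ≤ ‖x‖ * ‖y‖ * (2 * (Real.cosh L - Real.cos α)) := by gcongr
    _ = 2 * ‖x‖ * ‖y‖ * (Real.cosh L - Real.cos α) := by ring

end LogPolar

section LowerBound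

open InnerProductGeometry Filter Topology MeasureTheory

variable {V : Type*} [NormedAddCommGroup V] [InnerProductSpace ℝ V] {γ : ℝ → V}

lemma eventually_logPolarDist_lt_mul_sub {γ' : V} {t r : ℝ} (hγ : HasDerivWithinAt γ γ' (Ioi t) t)
    (ht : γ t ≠ 0) (hr : ‖γ'‖ / ‖γ t‖ < r) :
    ∀ᶠ u in 𝓝[>] t, logPolarDist (γ t) (γ u) < r * (u - t) := by
  have hr' : ‖γ'‖ < r * ‖γ t‖ := (div_lt_iff₀ (norm_pos_iff.2 ht)).1 hr
  have hcont : Tendsto γ (𝓝[>] t) (𝓝 (γ t)) := hγ.continuousWithinAt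
  have hangle : Tendsto (fun u => angle (γ t) (γ u)) (𝓝[>] t) (𝓝 0) := by
    have h : ContinuousAt (angle (γ t)) (γ t) := continuousAt_angle_right ht ht
    have h0 := h.tendsto
    rw [angle_self ht] at h0
    exact h0.comp hcont
  have hspeed : Tendsto (fun u => ‖slope γ t u‖ ^ 2) (𝓝[>] t) (𝓝 (‖γ'‖ ^ 2)) :=
    ((hasDerivWithinAt_iff_tendsto_slope' self_notMem_Ioi).1 hγ).norm.pow 2
  have hfactor : Tendsto
      (fun u => r ^ 2 * ((1 - angle (γ t) (γ u) ^ 2) * (‖γ t‖ * ‖γ u‖))) (𝓝[>] t)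
      (𝓝 (r ^ 2 * ((1 - 0 ^ 2) * (‖γ t‖ * ‖γ t‖)))) :=
    (((hangle.pow 2).const_sub 1).mul (hcont.norm.const_mul _)).const_mul _
  have hlim : ‖γ'‖ ^ 2 < r ^ 2 * ((1 - 0 ^ 2) * (‖γ t‖ * ‖γ t‖)) := by
    nlinarith [norm_nonneg γ']
  have hr0 : 0 < r := (by positivity : 0 ≤ ‖γ'‖ / ‖γ t‖).trans_lt hr
  filter_upwards [hspeed.eventually_lt hfactor hlim, hcont.eventually_ne ht, self_mem_nhdsWithin]
    with u hu hu0 (htu : t < u)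
  have hut : 0 < u - t := sub_pos.2 htu
  set c := (1 - angle (γ t) (γ u) ^ 2) * (‖γ t‖ * ‖γ u‖)
  have hc : 0 < c := pos_of_mul_pos_right ((sq_nonneg _).trans_lt hu) (sq_nonneg r)
  have hchord : ‖γ t - γ u‖ = (u - t) * ‖slope γ t u‖ := by
    rw [← Real.norm_of_nonneg hut.le, ← norm_smul, sub_smul_slope, vsub_eq_sub, norm_sub_rev]
  refine lt_of_pow_lt_pow_left₀ 2 (by positivity) (lt_of_mul_lt_mul_left ?_ hc.le)
  calc c * logPolarDist (γ t) (γ u) ^ 2 ≤ ‖γ t - γ u‖ ^ 2 :=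
        mul_logPolarDist_sq_le_norm_sub_sq ht hu0
    _ = (u - t) ^ 2 * ‖slope γ t u‖ ^ 2 := by rw [hchord, mul_pow]
    _ < (u - t) ^ 2 * (r ^ 2 * c) := by gcongr
    _ = c * (r * (u - t)) ^ 2 := by ring

lemma continuousOn_norm_derivWithin_div_norm {a b : ℝ} (hab : a < b)
    (hγ : ContDiffOn ℝ 1 γ (Icc a b)) (hγ0 : ∀ t ∈ Icc a b, γ t ≠ 0) :
    ContinuousOn (fun t => ‖derivWithin γ (Icc a b) t‖ / ‖γ t‖) (Icc a b) :=
  (hγ.continuousOn_derivWithin (uniqueDiffOn_Icc hab) le_rfl).norm.div hγ.continuousOn.norm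
    fun t ht => norm_ne_zero_iff.2 (hγ0 t ht)

lemma hasDerivWithinAt_integral_Ici {f : ℝ → ℝ} {a b t : ℝ} (hf : ContinuousOn f (Icc a b))
    (ht : t ∈ Ico a b) : HasDerivWithinAt (fun u => ∫ s in a..u, f s) (f t) (Ici t) t := by
  have hIcc : Icc a b ∈ 𝓝[>] t :=
    mem_of_superset (Ioo_mem_nhdsGT ht.2) fun s hs => ⟨ht.1.trans hs.1.le, hs.2.le⟩
  have hint : IntervalIntegrable f volume a t :=
    (hf.mono (Icc_subset_Icc_right ht.2.le)).intervalIntegrable_of_Icc ht.1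
  refine intervalIntegral.integral_hasDerivWithinAt_right hint ?_
    ((hf t (Ico_subset_Icc_self ht)).mono_of_mem_nhdsWithin hIcc)
  exact ⟨Icc a b, hIcc, hf.aestronglyMeasurable measurableSet_Icc⟩

lemma logPolarDist_le_integral {a b : ℝ} (hab : a < b) (hγ : ContDiffOn ℝ 1 γ (Icc a b))
    (hγ0 : ∀ t ∈ Icc a b, γ t ≠ 0) :
    logPolarDist (γ a) (γ b) ≤ ∫ t in a..b, ‖deriv γ t‖ / ‖γ t‖ := by
  set speed := fun t => ‖derivWithin γ (Icc a b) t‖ / ‖γ t‖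
  have hspeed : ContinuousOn speed (Icc a b) := continuousOn_norm_derivWithin_div_norm hab hγ hγ0
  have ha : γ a ≠ 0 := hγ0 a (left_mem_Icc.2 hab.le)
  have hdist : ContinuousOn (fun t => logPolarDist (γ a) (γ t)) (Icc a b) := fun t ht =>
    (continuousAt_logPolarDist_right ha (hγ0 t ht)).comp_continuousWithinAt (hγ.continuousOn t ht)
  have hprimitive : ContinuousOn (fun u => ∫ t in a..u, speed t) (Icc a b) := by
    have h := intervalIntegral.continuousOn_primitive_interval (μ := volume)
      (uIcc_of_le hab.le ▸ hspeed.integrableOn_Icc)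
    rwa [uIcc_of_le hab.le] at h
  have hslope : ∀ t ∈ Ico a b, ∀ r, speed t < r →
      ∃ᶠ u in 𝓝[>] t, slope (fun s => logPolarDist (γ a) (γ s)) t u < r := by
    intro t ht r hr
    have htIcc := Ico_subset_Icc_self ht
    have hderiv : HasDerivWithinAt γ (derivWithin γ (Icc a b) t) (Ioi t) t :=
      (hγ.differentiableOn one_ne_zero t htIcc).hasDerivWithinAt.mono_of_mem_nhdsWithin
        (mem_of_superset (Ioo_mem_nhdsGT ht.2) fun s hs => ⟨ht.1.trans hs.1.le, hs.2.le⟩)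
    refine Eventually.frequently ?_
    filter_upwards [eventually_logPolarDist_lt_mul_sub hderiv (hγ0 t htIcc) hr,
      self_mem_nhdsWithin] with u hu (htu : t < u)
    rw [slope_def_field, div_lt_iff₀ (sub_pos.2 htu)]
    linarith [logPolarDist_triangle (γ a) (γ t) (γ u)]
  calc logPolarDist (γ a) (γ b) ≤ ∫ t in a..b, speed t :=
        image_le_of_liminf_slope_right_le_deriv_boundary hdist (by simp [logPolarDist_self ha])
          hprimitive (fun t ht => hasDerivWithinAt_integral_Ici hspeed ht) hslope
          (right_mem_Icc.2 hab.le)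
    _ = ∫ t in a..b, ‖deriv γ t‖ / ‖γ t‖ := by
        refine intervalIntegral.integral_congr_Ioo_of_le hab.le fun t ht => ?_
        simp only [speed, derivWithin_of_mem_nhds (Icc_mem_nhds ht.1 ht.2)]

end LowerBound

section Spiral

open InnerProductGeometry

lemma exists_norm_eq_one_and_norm_smul_eq {E : Type*} [NormedAddCommGroup E] [NormedSpace ℝ E]
    [Nontrivial E] (v : E) : ∃ e : E, ‖e‖ = 1 ∧ ‖v‖ • e = v := by
  rcases eq_or_ne v 0 with rfl | hv
  · obtain ⟨e, he⟩ := exists_norm_eq E zero_le_one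
    exact ⟨e, he, by simp⟩
  · exact ⟨NormedSpace.normalize v, NormedSpace.norm_normalize hv,
      NormedSpace.norm_smul_normalize v⟩

variable {V : Type*} [NormedAddCommGroup V] [InnerProductSpace ℝ V] {x z : V}

lemma nontrivial_orthogonal_span_singleton (hV : 1 < Module.rank ℝ V) (x : V) :
    Nontrivial (ℝ ∙ x)ᗮ := by
  rw [Submodule.nontrivial_iff_ne_bot, ne_eq, Submodule.orthogonal_eq_bot_iff]
  intro htop
  have hle : Module.rank ℝ (ℝ ∙ x) ≤ 1 := by simpa using rank_span_le (R := ℝ) {x}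
  rw [htop, rank_top] at hle
  exact hle.not_gt hV

lemma norm_sub_cos_angle_smul (hx : x ≠ 0) (z : V) :
    ‖z - (‖z‖ / ‖x‖ * Real.cos (angle x z)) • x‖ = ‖z‖ * Real.sin (angle x z) := by
  have hx' : ‖x‖ ≠ 0 := norm_ne_zero_iff.2 hx
  rw [← sq_eq_sq₀ (norm_nonneg _) (mul_nonneg (norm_nonneg _) (sin_angle_nonneg x z)),
    norm_sub_sq_real, real_inner_smul_right, real_inner_comm, ← cos_angle_mul_norm_mul_norm,
    norm_smul, mul_pow, mul_pow, Real.sin_sq, Real.norm_eq_abs, sq_abs]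
  field_simp
  ring

lemma exists_orthogonal_eq_cos_add_sin (hV : 1 < Module.rank ℝ V) (hx : x ≠ 0) (z : V) :
    ∃ e : V, ‖e‖ = ‖x‖ ∧ inner ℝ x e = 0 ∧
      z = (‖z‖ / ‖x‖) • (Real.cos (angle x z) • x + Real.sin (angle x z) • e) := by
  have hx' : ‖x‖ ≠ 0 := norm_ne_zero_iff.2 hx
  set r := z - (‖z‖ / ‖x‖ * Real.cos (angle x z)) • x with hr
  have horth : r ∈ (ℝ ∙ x)ᗮ := by
    rw [Submodule.mem_orthogonal_singleton_iff_inner_right, inner_sub_right,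
      real_inner_smul_right, real_inner_self_eq_norm_sq, ← cos_angle_mul_norm_mul_norm]
    field_simp
    ring
  have := nontrivial_orthogonal_span_singleton hV x
  obtain ⟨⟨e, he⟩, hnorm, hsmul⟩ :=
    exists_norm_eq_one_and_norm_smul_eq (⟨r, horth⟩ : (ℝ ∙ x)ᗮ)
  replace hnorm : ‖e‖ = 1 := hnorm
  replace hsmul : (‖z‖ * Real.sin (angle x z)) • e = r := by
    rw [← norm_sub_cos_angle_smul hx]; exact congrArg Subtype.val hsmul
  refine ⟨‖x‖ • e, by simp [norm_smul, hnorm], ?_, ?_⟩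
  · rw [real_inner_smul_right, Submodule.mem_orthogonal_singleton_iff_inner_right.1 he, mul_zero]
  · rw [smul_add, smul_smul, smul_smul, smul_smul, mul_right_comm, div_mul_cancel₀ _ hx', hsmul, hr,
      add_sub_cancel]

lemma exists_conformal_map_complex (hV : 1 < Module.rank ℝ V) (hx : x ≠ 0) (hz : z ≠ 0) :
    ∃ φ : ℂ →L[ℝ] V, (∀ w, ‖φ w‖ = ‖w‖ * ‖x‖) ∧ φ 1 = x ∧
      φ (Complex.exp ((Real.log ‖z‖ - Real.log ‖x‖ : ℝ) + angle x z * Complex.I)) = z := by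
  obtain ⟨e, he, hxe, hze⟩ := exists_orthogonal_eq_cos_add_sin hV hx z
  have hx' : 0 < ‖x‖ := norm_pos_iff.2 hx
  have hz' : 0 < ‖z‖ := norm_pos_iff.2 hz
  refine ⟨Complex.reCLM.smulRight x + Complex.imCLM.smulRight e, fun w => ?_, by simp, ?_⟩
  · rw [← sq_eq_sq₀ (by positivity) (by positivity), mul_pow, Complex.sq_norm,
      Complex.normSq_apply]
    simp only [add_apply, ContinuousLinearMap.smulRight_apply,
      Complex.reCLM_apply, Complex.imCLM_apply, norm_add_sq_real, norm_smul, he,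
      real_inner_smul_left, real_inner_smul_right, hxe, mul_pow, Real.norm_eq_abs, sq_abs]
    ring
  · have hexp : Real.exp (Real.log ‖z‖ - Real.log ‖x‖) = ‖z‖ / ‖x‖ := by
      rw [Real.exp_sub, Real.exp_log hz', Real.exp_log hx']
    conv_rhs => rw [hze]
    simp [Complex.exp_re, Complex.exp_im, hexp, smul_smul]

lemma deriv_continuousLinearMap_exp_mul (φ : ℂ →L[ℝ] V) (c : ℂ) (t : ℝ) :
    deriv (fun s : ℝ => φ (Complex.exp (s * c))) t = φ (Complex.exp (t * c) * c) := by
  have hexp : HasDerivAt (fun s : ℝ => Complex.exp (s * c)) (Complex.exp (t * c) * c) t := by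
    simpa using (((hasDerivAt_id t).ofReal_comp).mul_const c).cexp
  exact (φ.hasFDerivAt.comp_hasDerivAt t hexp).deriv

lemma exists_path_norm_deriv_div_norm_eq_logPolarDist (hV : 1 < Module.rank ℝ V) (hx : x ≠ 0)
    (hz : z ≠ 0) :
    ∃ γ : ℝ → V, γ 0 = x ∧ γ 1 = z ∧ (∀ t, γ t ≠ 0) ∧ ContDiff ℝ 1 γ ∧
      ∀ t, ‖deriv γ t‖ / ‖γ t‖ = logPolarDist x z := by
  obtain ⟨φ, hφ, hφx, hφz⟩ := exists_conformal_map_complex hV hx hz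
  set c : ℂ := (Real.log ‖z‖ - Real.log ‖x‖ : ℝ) + angle x z * Complex.I with hc
  have hx' : ‖x‖ ≠ 0 := norm_ne_zero_iff.2 hx
  have hcnorm : ‖c‖ = logPolarDist x z := by
    rw [hc, Complex.norm_add_mul_I, logPolarDist, sub_sq_comm]
  refine ⟨fun t => φ (Complex.exp (t * c)), by simp [hφx], by simp [hφz], fun t => ?_, ?_,
    fun t => ?_⟩
  · simp [← norm_ne_zero_iff, hφ, hx']
  · exact φ.contDiff.comp (Complex.ofRealCLM.contDiff.mul contDiff_const).cexp
  · rw [deriv_continuousLinearMap_exp_mul, hφ, hφ, norm_mul, hcnorm]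
    field [norm_ne_zero_iff.2 (Complex.exp_ne_zero (t * c))]

end Spiral

section MartinOsgood

variable {n : ℕ}

lemma bdist_compl_zero [NeZero n] (x : EuclideanSpace ℝ (Fin n)) : bdist {0}ᶜ x = ‖x‖ := by
  have := Module.punctured_nhds_neBot ℝ (EuclideanSpace ℝ (Fin n)) 0
  rw [bdist, frontier_compl, frontier, closure_singleton, interior_singleton, sdiff_empty,
    infDist_singleton, dist_zero_right]

lemma qhLength_compl_zero [NeZero n] (γ : ℝ → EuclideanSpace ℝ (Fin n)) :
    qhLength {0}ᶜ γ = ∫ t in (0 : ℝ)..1, ‖deriv γ t‖ / ‖γ t‖ := by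
  simp only [qhLength, bdist_compl_zero]

theorem qhDist_compl_zero (hn : 2 ≤ n) {x z : EuclideanSpace ℝ (Fin n)} (hx : x ≠ 0)
    (hz : z ≠ 0) : qhDist {0}ᶜ x z = logPolarDist x z := by
  have : NeZero n := ⟨by lia⟩
  have hrank : 1 < Module.rank ℝ (EuclideanSpace ℝ (Fin n)) := by
    rw [← Module.finrank_eq_rank, finrank_euclideanSpace_fin]
    exact_mod_cast hn
  refine IsLeast.csInf_eq ⟨?_, ?_⟩
  · obtain ⟨γ, h0, h1, hγ0, hγ, hspeed⟩ :=
      exists_path_norm_deriv_div_norm_eq_logPolarDist hrank hx hz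
    refine ⟨⟨γ, h0, h1, fun t _ => hγ0 t, hγ.contDiffOn⟩, ?_⟩
    simp [qhLength_compl_zero, hspeed]
  · rintro _ ⟨⟨γ, rfl, rfl, hγ0, hγ⟩, rfl⟩
    change logPolarDist (γ 0) (γ 1) ≤ qhLength {0}ᶜ γ
    rw [qhLength_compl_zero]
    exact logPolarDist_le_integral zero_lt_one hγ hγ0

end MartinOsgood

section Comparison

open InnerProductGeometry

variable {V : Type*} [NormedAddCommGroup V] [InnerProductSpace ℝ V] {x y z : V}

lemma angle_le_angle_of_logPolarDist_le (hz : z ≠ 0) (hzy : ‖z‖ ≤ ‖y‖) (hyx : ‖y‖ ≤ ‖x‖)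
    (h : logPolarDist x z ≤ logPolarDist y z) : angle x z ≤ angle y z := by
  have hz' : 0 < ‖z‖ := norm_pos_iff.2 hz
  have hlogzy := Real.log_le_log hz' hzy
  have hlogyx := Real.log_le_log (hz'.trans_le hzy) hyx
  have hsq := pow_le_pow_left₀ (logPolarDist_nonneg x z) h 2
  rw [logPolarDist_sq, logPolarDist_sq] at hsq
  refine (sq_le_sq₀ (angle_nonneg x z) (angle_nonneg y z)).1 ?_
  have hlogsq : (Real.log ‖y‖ - Real.log ‖z‖) ^ 2 ≤ (Real.log ‖x‖ - Real.log ‖z‖) ^ 2 := by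
    gcongr
  linarith

lemma norm_sub_lt_norm_sub_of_logPolarDist_le (hz : z ≠ 0) (hzx : ‖z‖ ≤ ‖x‖) (hxy : ‖x‖ < ‖y‖)
    (hangle : angle y z ≤ angle x z) (h : logPolarDist x z ≤ logPolarDist y z) :
    ‖x - z‖ < ‖y - z‖ := by
  have hz' : 0 < ‖z‖ := norm_pos_iff.2 hz
  have hx' : 0 < ‖x‖ := hz'.trans_le hzx
  have hlogzx := Real.log_le_log hz' hzx
  have hlogxy := Real.log_lt_log hx' hxy
  have hsq := pow_le_pow_left₀ (logPolarDist_nonneg x z) h 2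
  rw [logPolarDist_sq, logPolarDist_sq] at hsq
  refine lt_of_pow_lt_pow_left₀ 2 (norm_nonneg _) ?_
  rw [norm_sub_sq_eq_cosh_sub_cos (norm_pos_iff.1 hx') hz,
    norm_sub_sq_eq_cosh_sub_cos (norm_pos_iff.1 (hx'.trans hxy)) hz]
  set Lx := Real.log ‖x‖ - Real.log ‖z‖
  set Ly := Real.log ‖y‖ - Real.log ‖z‖
  have hL0 : 0 ≤ Lx := sub_nonneg.2 hlogzx
  have hL : Lx < Ly := sub_lt_sub_right hlogxy _
  have hcosh := sq_sub_sq_div_two_le_cosh_sub_cosh hL0 hL.le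
  have hcos := cos_sub_cos_le_sq_sub_sq_div_two (angle_nonneg y z) hangle
  have hpos : 0 < Real.cosh Ly - Real.cos (angle y z) := by
    linarith [Real.one_lt_cosh.2 (hL0.trans_lt hL).ne', Real.cos_le_one (angle y z)]
  calc 2 * ‖x‖ * ‖z‖ * (Real.cosh Lx - Real.cos (angle x z))
      ≤ 2 * ‖x‖ * ‖z‖ * (Real.cosh Ly - Real.cos (angle y z)) := by
        gcongr 2 * ‖x‖ * ‖z‖ * ?_
        linarith
    _ < 2 * ‖y‖ * ‖z‖ * (Real.cosh Ly - Real.cos (angle y z)) := by gcongr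

lemma sin_angle_mul_dist (p z : V) :
    Real.sin (EuclideanGeometry.angle p z 0) * dist p z = Real.sin (angle p z) * ‖p‖ := by
  have h := EuclideanGeometry.law_sin (0 : V) z p
  rw [EuclideanGeometry.angle_comm 0 z p, dist_comm z p] at h
  simpa [EuclideanGeometry.angle] using h

lemma cos_angle_mul_dist (hz : z ≠ 0) (p : V) :
    Real.cos (EuclideanGeometry.angle p z 0) * dist p z = ‖z‖ - Real.cos (angle p z) * ‖p‖ := by
  refine mul_right_cancel₀ (norm_ne_zero_iff.2 hz) ?_
  calc Real.cos (EuclideanGeometry.angle p z 0) * dist p z * ‖z‖ = inner ℝ (p - z) (-z) := by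
        rw [← cos_angle_mul_norm_mul_norm, norm_neg, dist_eq_norm, mul_assoc,
          EuclideanGeometry.angle, vsub_eq_sub, vsub_eq_sub, zero_sub]
    _ = (‖z‖ - Real.cos (angle p z) * ‖p‖) * ‖z‖ := by
        rw [inner_neg_right, inner_sub_left, ← cos_angle_mul_norm_mul_norm p,
          real_inner_self_eq_norm_sq]
        ring

lemma sin_angle_sub_angle_mul_dist_mul_dist_nonneg (hz : z ≠ 0) (hzy : ‖z‖ ≤ ‖y‖)
    (hyx : ‖y‖ ≤ ‖x‖) (h : angle x z ≤ angle y z) :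
    0 ≤ Real.sin (EuclideanGeometry.angle x z 0 - EuclideanGeometry.angle y z 0)
      * (dist x z * dist y z) := by
  set a := angle x z
  set b := angle y z
  have hsina : 0 ≤ Real.sin a := sin_angle_nonneg x z
  have hsinba : 0 ≤ Real.sin (b - a) :=
    Real.sin_nonneg_of_nonneg_of_le_pi (sub_nonneg.2 h)
      ((sub_le_self b (angle_nonneg x z)).trans (angle_le_pi y z))
  have hsinb : Real.sin b ≤ Real.sin a + Real.sin (b - a) := by
    simpa using sin_add_le_sin_add_sin hsina hsinba
  calc 0 ≤ ‖x‖ * ‖z‖ * Real.sin a + ‖y‖ * ‖x‖ * Real.sin (b - a)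
        - ‖y‖ * ‖z‖ * (Real.sin a + Real.sin (b - a)) := by
        rw [sub_nonneg, mul_add]
        have hzx := hzy.trans hyx
        gcongr
    _ ≤ ‖x‖ * ‖z‖ * Real.sin a + ‖y‖ * ‖x‖ * Real.sin (b - a) - ‖y‖ * ‖z‖ * Real.sin b := by
        gcongr
    _ = Real.sin a * ‖x‖ * (‖z‖ - Real.cos b * ‖y‖)
          - (‖z‖ - Real.cos a * ‖x‖) * (Real.sin b * ‖y‖) := by
        rw [Real.sin_sub]; ring
    _ = Real.sin (EuclideanGeometry.angle x z 0 - EuclideanGeometry.angle y z 0)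
          * (dist x z * dist y z) := by
        rw [← sin_angle_mul_dist, ← sin_angle_mul_dist, ← cos_angle_mul_dist hz,
          ← cos_angle_mul_dist hz, Real.sin_sub]
        ring

lemma angle_le_angle_of_norm_le_of_angle_le (hz : z ≠ 0) (hxz : x ≠ z) (hyz : y ≠ z)
    (hzy : ‖z‖ ≤ ‖y‖) (hyx : ‖y‖ ≤ ‖x‖) (h : angle x z ≤ angle y z) :
    EuclideanGeometry.angle y z 0 ≤ EuclideanGeometry.angle x z 0 := by
  have hx : 0 < dist x z := dist_pos.2 hxz
  have hy : 0 < dist y z := dist_pos.2 hyz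
  have hx0 : 0 ≤ EuclideanGeometry.angle x z 0 := EuclideanGeometry.angle_nonneg x z 0
  have hypi : EuclideanGeometry.angle y z 0 ≤ Real.pi := EuclideanGeometry.angle_le_pi y z 0
  by_contra! hlt
  have hsin := nonneg_of_mul_nonneg_left
    (sin_angle_sub_angle_mul_dist_mul_dist_nonneg hz hzy hyx h) (mul_pos hx hy)
  have hdiff : Real.pi ≤ EuclideanGeometry.angle y z 0 - EuclideanGeometry.angle x z 0 := by
    by_contra! hπ
    have := Real.sin_pos_of_pos_of_lt_pi (sub_pos.2 hlt) hπ
    rw [← neg_sub, Real.sin_neg] at hsin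
    linarith
  -- Now `z` lies between `0` and `y`, so `x` is on the same ray, beyond `z`: then `∠ x z 0 = π`.
  have hcosx := cos_angle_mul_dist hz x
  rw [(by linarith : EuclideanGeometry.angle x z 0 = 0), Real.cos_zero, one_mul] at hcosx
  have hcosy := cos_angle_mul_dist hz y
  rw [(by linarith : EuclideanGeometry.angle y z 0 = Real.pi), Real.cos_pi] at hcosy
  have hcos : Real.cos (angle y z) ≤ Real.cos (angle x z) :=
    Real.cos_le_cos_of_nonneg_of_le_pi (angle_nonneg x z) (angle_le_pi y z) h
  have htri : ‖y‖ ≤ dist y z + ‖z‖ := by simpa [dist_eq_norm] using norm_le_norm_sub_add y z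
  have hy' : 0 < ‖y‖ := (norm_pos_iff.2 hz).trans_le hzy
  have hcosy_one : 1 ≤ Real.cos (angle y z) := le_of_mul_le_mul_right (by linarith) hy'
  have hcosx_norm : ‖x‖ ≤ Real.cos (angle x z) * ‖x‖ :=
    le_mul_of_one_le_left (norm_nonneg x) (hcosy_one.trans hcos)
  linarith

end Comparison

theorem stmt_5 (n : ℕ) (hn : 2 ≤ n) (x y z : EuclideanSpace ℝ (Fin n))
    (hx : x ≠ 0) (hy : y ≠ 0) (hz : z ≠ 0)
    (hk : qhDist ({0}ᶜ : Set (EuclideanSpace ℝ (Fin n))) x z =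
          qhDist ({0}ᶜ : Set (EuclideanSpace ℝ (Fin n))) y z)
    (hzx : ‖z‖ ≤ ‖x‖) (hzy : ‖z‖ ≤ ‖y‖)
    (hang : EuclideanGeometry.angle x z 0 < EuclideanGeometry.angle y z 0) :
    dist x z < dist y z := by
  rw [qhDist_compl_zero hn hx hz, qhDist_compl_zero hn hy hz] at hk
  have hiff : x = z ↔ y = z := by
    rw [← logPolarDist_eq_zero_iff hx hz, ← logPolarDist_eq_zero_iff hy hz, hk]
  have hxz : x ≠ z := fun h => hang.ne (by rw [h, hiff.1 h])
  have hyz : y ≠ z := mt hiff.2 hxz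
  have hxy : ‖x‖ < ‖y‖ := by
    by_contra! hyx
    exact hang.not_ge (angle_le_angle_of_norm_le_of_angle_le hz hxz hyz hzy hyx
      (angle_le_angle_of_logPolarDist_le hz hzy hyx hk.le))
  have hangle := angle_le_angle_of_logPolarDist_le hz hzx hxy.le hk.ge
  rw [dist_eq_norm, dist_eq_norm]
  exact norm_sub_lt_norm_sub_of_logPolarDist_le hz hzx hxy hangle hk.le
end

section
/- Let G ⊊ ℝⁿ be a domain (nonempty open connected proper subset) with finite diameter, and set r = sqrt(n/(2n+2))·diam(G). Then for all distinct x, y ∈ G, writing t = |x−y|/r, one has k_G(x,y) ≥ 2·log(2/(2 − t)) ≥ t. Equivalently, the identity map from (G, k_G) to (G, |·|) has modulus of continuity ω(t) = 2r(1 − e^{−t/2}). -/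
open Set Metric

/-!
Prolong the segment from `x` to `y` at both ends by the distances `δ(x)` and `δ(y)` to `∂G`. It
stays in the closure of `G`, so `δ(x) + |x - y| + δ(y) ≤ diam G ≤ 2r`. On the other hand, `δ` is
`1`-Lipschitz, so after arc length `ℓ` from `x` it is at most `δ(x) + ℓ`. Integrating along both
halves of a path, split where the bounds coming from `x` and from `y` agree, gives
`k_G(x, y) ≥ 2 log (1 + |x - y| / (δ(x) + δ(y)))`. The two estimates combine to
`k_G(x, y) ≥ 2 log (2r / (2r - |x - y|))`.
-/

variable {E : Type*} [NormedAddCommGroup E] [NormedSpace ℝ E] {G : Set E} {x y : E}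

section SmoothPaths

open scoped ContDiff

/-- `x` and `y` are joined by a smooth path in `G`. The path is constant outside `[0, 1]`, so that
concatenations are smooth. -/
def SmoothlyJoinedIn (G : Set E) (x y : E) : Prop :=
  ∃ γ : ℝ → E, ContDiff ℝ ∞ γ ∧ (∀ t, γ t ∈ G) ∧ (∀ t ≤ 0, γ t = x) ∧ ∀ t, 1 ≤ t → γ t = y

theorem SmoothlyJoinedIn.of_segment_subset (h : segment ℝ x y ⊆ G) : SmoothlyJoinedIn G x y := by
  refine ⟨fun t ↦ AffineMap.lineMap x y (Real.smoothTransition t), ?_, fun t ↦ h ?_, ?_, ?_⟩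
  · simp only [AffineMap.lineMap_apply_module']
    exact (Real.smoothTransition.contDiff.smul contDiff_const).add contDiff_const
  · rw [segment_eq_image_lineMap]
    exact mem_image_of_mem _ ⟨Real.smoothTransition.nonneg t, Real.smoothTransition.le_one t⟩
  · intro t ht
    simp [Real.smoothTransition.zero_of_nonpos ht]
  · intro t ht
    simp [Real.smoothTransition.one_of_one_le ht]

theorem SmoothlyJoinedIn.trans {z : E} (hxy : SmoothlyJoinedIn G x y)
    (hyz : SmoothlyJoinedIn G y z) : SmoothlyJoinedIn G x z := by
  obtain ⟨γ, hγ, hγG, hγ₀, hγ₁⟩ := hxy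
  obtain ⟨η, hη, hηG, hη₀, hη₁⟩ := hyz
  -- At every time one of the two summands `γ` and `η - y` is at rest.
  refine ⟨fun t ↦ γ (2 * t) + (η (2 * t - 1) - y), by fun_prop, fun t ↦ ?_, fun t ht ↦ ?_,
    fun t ht ↦ ?_⟩
  · rcases le_total (2 * t) 1 with h | h
    · simpa [hη₀ (2 * t - 1) (by linarith)] using hγG (2 * t)
    · simpa [hγ₁ _ h] using hηG (2 * t - 1)
  · simp [hγ₀ (2 * t) (by linarith), hη₀ (2 * t - 1) (by linarith)]
  · simp [hγ₁ (2 * t) (by linarith), hη₁ (2 * t - 1) (by linarith)]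

theorem smoothlyJoinedIn_of_isPreconnected (hGo : IsOpen G) (hG : IsPreconnected G) (hx : x ∈ G)
    (hy : y ∈ G) : SmoothlyJoinedIn G x y := by
  refine hG.induction₂' (SmoothlyJoinedIn G) (fun a ha ↦ ?_)
    (fun _ _ _ _ _ _ hab hbc ↦ hab.trans hbc) hx hy
  obtain ⟨ε, hε, hball⟩ := Metric.isOpen_iff.1 hGo a ha
  filter_upwards [mem_nhdsWithin_of_mem_nhds (ball_mem_nhds a hε)] with b hb
  have joined {p q : E} (hp : p ∈ ball a ε) (hq : q ∈ ball a ε) : SmoothlyJoinedIn G p q :=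
    .of_segment_subset (((convex_ball a ε).segment_subset hp hq).trans hball)
  exact ⟨joined (mem_ball_self hε) hb, joined hb (mem_ball_self hε)⟩

end SmoothPaths

section FrontierDistance

theorem ball_infDist_frontier_subset_interior (hx : x ∈ closure G) :
    ball x (infDist x (frontier G)) ⊆ interior G := by
  rcases (infDist_nonneg : 0 ≤ infDist x (frontier G)).eq_or_lt' with h₀ | hpos
  · simp [h₀]
  have avoid : ∀ z ∈ closure G, z ∈ ball x (infDist x (frontier G)) → z ∈ interior G :=
    fun z hzG hz ↦ by_contra fun hzi ↦ disjoint_ball_infDist.notMem_of_mem_left hz ⟨hzG, hzi⟩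
  refine (convex_ball x _).isPreconnected.subset_of_closure_inter_subset isOpen_interior
    ⟨x, mem_ball_self hpos, avoid x hx (mem_ball_self hpos)⟩ fun z hz ↦ ?_
  exact avoid z (closure_mono interior_subset hz.1) hz.2

theorem closedBall_infDist_frontier_subset_closure (hx : x ∈ closure G) :
    closedBall x (infDist x (frontier G)) ⊆ closure G := by
  rcases eq_or_ne (infDist x (frontier G)) 0 with h₀ | hne
  · simpa [h₀] using hx
  · rw [← closure_ball x hne]
    exact closure_mono ((ball_infDist_frontier_subset_interior hx).trans interior_subset)

/-- Both ends of the segment can be prolonged by their distances to `∂G` without leaving the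
closure of `G`. -/
theorem infDist_frontier_add_dist_add_infDist_frontier_le_diam (hG : Bornology.IsBounded G)
    (hx : x ∈ closure G) (hy : y ∈ closure G) (hxy : x ≠ y) :
    infDist x (frontier G) + dist x y + infDist y (frontier G) ≤ diam G := by
  set d := dist x y
  set δx := infDist x (frontier G)
  set δy := infDist y (frontier G)
  have hd : 0 < d := dist_pos.2 hxy
  have hδx : 0 ≤ δx := infDist_nonneg
  have hδy : 0 ≤ δy := infDist_nonneg
  let line : ℝ → E := AffineMap.lineMap x y
  have ha : line (-(δx / d)) ∈ closure G := by
    refine closedBall_infDist_frontier_subset_closure hx (mem_closedBall.2 (le_of_eq ?_))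
    rw [dist_lineMap_left, norm_neg, Real.norm_of_nonneg (by positivity), div_mul_cancel₀ _ hd.ne']
  have hb : line (1 + δy / d) ∈ closure G := by
    refine closedBall_infDist_frontier_subset_closure hy (mem_closedBall.2 (le_of_eq ?_))
    rw [dist_lineMap_right, sub_add_cancel_left, norm_neg, Real.norm_of_nonneg (by positivity),
      div_mul_cancel₀ _ hd.ne']
  calc δx + d + δy = dist (line (-(δx / d))) (line (1 + δy / d)) := by
        rw [dist_lineMap_lineMap, dist_comm, Real.dist_eq, abs_of_nonneg]
        · field_simp
          ring
        · have : 0 ≤ δx / d + δy / d := by positivity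
          linarith
    _ ≤ diam (closure G) := dist_le_diam_of_mem hG.closure ha hb
    _ = diam G := diam_closure G

end FrontierDistance

section WeightedLength

open MeasureTheory

variable {a b : ℝ} {γ : ℝ → E} {ρ : E → ℝ}

theorem log_one_add_integral_div_le_integral {v φ : ℝ → ℝ} {c : ℝ} (hab : a ≤ b) (hc : 0 < c)
    (hv : IntervalIntegrable v volume a b) (hvc : ContinuousOn v (Ioo a b))
    (hv₀ : ∀ t ∈ Icc a b, 0 ≤ v t) (hφ : IntervalIntegrable φ volume a b)
    (hvφ : ∀ t ∈ Ioo a b, v t / (c + ∫ s in a..t, v s) ≤ φ t) :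
    Real.log (1 + (∫ t in a..b, v t) / c) ≤ ∫ t in a..b, φ t := by
  let F : ℝ → ℝ := fun t ↦ c + ∫ s in a..t, v s
  have hF_pos : ∀ t ∈ Icc a b, 0 < F t := fun t ht ↦
    add_pos_of_pos_of_nonneg hc <| intervalIntegral.integral_nonneg ht.1 fun s hs ↦
      hv₀ s ⟨hs.1, hs.2.trans ht.2⟩
  have hF_cont : ContinuousOn F (Icc a b) := by
    rw [← uIcc_of_le hab]
    exact continuousOn_const.add
      (intervalIntegral.continuousOn_primitive_interval' hv left_mem_uIcc)
  have hF_deriv : ∀ t ∈ Ioo a b, HasDerivAt F (v t) t := fun t ht ↦ by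
    refine (intervalIntegral.integral_hasDerivAt_right (hv.mono_set ?_)
      (hvc.stronglyMeasurableAtFilter isOpen_Ioo t ht)
      (hvc.continuousAt (isOpen_Ioo.mem_nhds ht))).const_add c
    exact uIcc_subset_uIcc_left (Icc_subset_uIcc (Ioo_subset_Icc_self ht))
  calc Real.log (1 + (∫ t in a..b, v t) / c) = Real.log (F b / c) := by
        rw [add_div, div_self hc.ne']
    _ = Real.log (F b) - Real.log (F a) := by
        rw [Real.log_div (hF_pos b (right_mem_Icc.2 hab)).ne' hc.ne']
        simp only [F, intervalIntegral.integral_same, add_zero]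
    _ ≤ ∫ t in a..b, φ t :=
        intervalIntegral.sub_le_integral_of_hasDeriv_right_of_le hab
          (hF_cont.log fun t ht ↦ (hF_pos t ht).ne')
          (fun t ht ↦ ((hF_deriv t ht).log
            (hF_pos t (Ioo_subset_Icc_self ht)).ne').hasDerivWithinAt)
          ((intervalIntegrable_iff_integrableOn_Icc_of_le hab).1 hφ) hvφ

theorem intervalIntegrable_deriv_of_contDiffOn (hab : a ≤ b) (hγ : ContDiffOn ℝ 1 γ (Icc a b)) :
    IntervalIntegrable (deriv γ) volume a b := by
  rcases hab.eq_or_lt with rfl | hlt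
  · exact .refl
  rw [intervalIntegrable_iff_integrableOn_Ioo_of_le hab]
  refine (((hγ.continuousOn_derivWithin (uniqueDiffOn_Icc hlt) le_rfl).integrableOn_Icc).mono_set
    Ioo_subset_Icc_self).congr_fun (fun t ht ↦ ?_) measurableSet_Ioo
  exact derivWithin_of_mem_nhds (Icc_mem_nhds ht.1 ht.2)

theorem intervalIntegrable_norm_deriv_div (hab : a ≤ b) (hγ : ContDiffOn ℝ 1 γ (Icc a b))
    (hρ : Continuous ρ) (hpos : ∀ t ∈ Icc a b, 0 < ρ (γ t)) :
    IntervalIntegrable (fun t ↦ ‖deriv γ t‖ / ρ (γ t)) volume a b := by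
  refine (intervalIntegrable_deriv_of_contDiffOn hab hγ).norm.mul_continuousOn ?_
  rw [uIcc_of_le hab]
  exact (hρ.comp_continuousOn hγ.continuousOn).inv₀ fun t ht ↦ (hpos t ht).ne'

/-- The Gehring–Palka inequality. The arc length `ℓ` from `γ a` satisfies `ρ ∘ γ ≤ ρ (γ a) + ℓ`,
and `dℓ / (ρ (γ a) + ℓ)` is exact. -/
theorem log_one_add_dist_div_left_le_integral (hab : a ≤ b) (hγ : ContDiffOn ℝ 1 γ (Icc a b))
    (hρ : LipschitzWith 1 ρ) (hpos : ∀ t ∈ Icc a b, 0 < ρ (γ t)) :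
    Real.log (1 + dist (γ a) (γ b) / ρ (γ a)) ≤ ∫ t in a..b, ‖deriv γ t‖ / ρ (γ t) := by
  have hspeed : IntervalIntegrable (fun t ↦ ‖deriv γ t‖) volume a b :=
    (intervalIntegrable_deriv_of_contDiffOn hab hγ).norm
  have hγ' : ContDiffOn ℝ 1 γ (Ioo a b) := hγ.mono Ioo_subset_Icc_self
  have dist_le_arcLength : ∀ t ∈ Icc a b, dist (γ a) (γ t) ≤ ∫ s in a..t, ‖deriv γ s‖ := by
    intro t ht
    rw [dist_comm, dist_eq_norm]
    exact norm_sub_le_integral_of_norm_deriv_le_of_le ht.1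
      (hγ.continuousOn.mono (Icc_subset_Icc_right ht.2))
      ((hγ'.differentiableOn one_ne_zero).mono (Ioo_subset_Ioo_right ht.2))
      (.of_forall fun _ _ ↦ le_rfl)
      (hspeed.mono_set (uIcc_subset_uIcc_left (Icc_subset_uIcc ht)))
  have hρa : 0 < ρ (γ a) := hpos a (left_mem_Icc.2 hab)
  calc Real.log (1 + dist (γ a) (γ b) / ρ (γ a))
      ≤ Real.log (1 + (∫ t in a..b, ‖deriv γ t‖) / ρ (γ a)) := by
        gcongr
        exact dist_le_arcLength b (right_mem_Icc.2 hab)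
    _ ≤ ∫ t in a..b, ‖deriv γ t‖ / ρ (γ t) := by
        refine log_one_add_integral_div_le_integral hab hρa hspeed
          (hγ'.continuousOn_deriv_of_isOpen isOpen_Ioo le_rfl).norm (fun _ _ ↦ norm_nonneg _)
          (intervalIntegrable_norm_deriv_div hab hγ hρ.continuous hpos) fun t ht ↦ ?_
        have htI := Ioo_subset_Icc_self ht
        refine div_le_div_of_nonneg_left (norm_nonneg _) (hpos t htI) ?_
        have hlip : ρ (γ t) ≤ ρ (γ a) + dist (γ a) (γ t) := by
          simpa [dist_comm] using hρ.le_add_mul (γ t) (γ a)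
        linarith [dist_le_arcLength t htI]

theorem log_one_add_dist_div_right_le_integral (hab : a ≤ b) (hγ : ContDiffOn ℝ 1 γ (Icc a b))
    (hρ : LipschitzWith 1 ρ) (hpos : ∀ t ∈ Icc a b, 0 < ρ (γ t)) :
    Real.log (1 + dist (γ a) (γ b) / ρ (γ b)) ≤ ∫ t in a..b, ‖deriv γ t‖ / ρ (γ t) := by
  let γrev : ℝ → E := fun t ↦ γ (a + b - t)
  have hmaps : MapsTo (fun t ↦ a + b - t) (Icc a b) (Icc a b) := fun t ht ↦
    ⟨by linarith [ht.2], by linarith [ht.1]⟩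
  have hγrev : ContDiffOn ℝ 1 γrev (Icc a b) :=
    hγ.comp (contDiff_const.sub contDiff_id).contDiffOn hmaps
  have hreverse : ∫ t in a..b, ‖deriv γrev t‖ / ρ (γrev t)
      = ∫ t in a..b, ‖deriv γ t‖ / ρ (γ t) := by
    simp only [γrev, deriv_comp_const_sub, norm_neg]
    rw [intervalIntegral.integral_comp_sub_left (fun t ↦ ‖deriv γ t‖ / ρ (γ t)) (a + b)]
    simp only [add_sub_cancel_right, add_sub_cancel_left]
  simpa [hreverse, γrev, dist_comm] using
    log_one_add_dist_div_left_le_integral hab hγrev hρ fun t ht ↦ hpos _ (hmaps ht)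

theorem two_mul_log_one_add_div_add_le {u v p q d : ℝ} (hu : 0 < u) (hv : 0 < v) (hd : 0 ≤ d)
    (hdpq : d ≤ p + q) (hupvq : u + p = v + q) :
    2 * Real.log (1 + d / (u + v)) ≤ Real.log (1 + p / u) + Real.log (1 + q / v) := by
  set m := u + p
  have hm : 0 < m := by linarith
  have base_le : 1 + d / (u + v) ≤ 2 * m / (u + v) := by
    rw [one_add_div (by positivity)]
    gcongr
    linarith
  have sq_le : (2 * m / (u + v)) ^ 2 ≤ m / u * (m / v) := by
    have amgm : 4 * (u * v) ≤ (u + v) ^ 2 := by linarith [four_mul_le_sq_add u v]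
    calc (2 * m / (u + v)) ^ 2 = 4 * m ^ 2 / (u + v) ^ 2 := by rw [div_pow, mul_pow]; norm_num
      _ ≤ 4 * m ^ 2 / (4 * (u * v)) := by gcongr
      _ = m / u * (m / v) := by field_simp
  calc 2 * Real.log (1 + d / (u + v)) = Real.log ((1 + d / (u + v)) ^ 2) := by
        rw [Real.log_pow, Nat.cast_ofNat]
    _ ≤ Real.log (m / u * (m / v)) := by
        refine Real.log_le_log (by positivity) (le_trans ?_ sq_le)
        gcongr
    _ = Real.log (1 + p / u) + Real.log (1 + q / v) := by
        rw [Real.log_mul (by positivity) (by positivity), one_add_div hu.ne', one_add_div hv.ne',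
          ← hupvq]

/-- Apply the Gehring–Palka inequality on both sides of a point of the path where the bounds
`ρ (γ a) + |γ a - ·|` and `ρ (γ b) + |· - γ b|` for `ρ` agree. -/
theorem two_mul_log_one_add_dist_div_add_le_integral (hab : a ≤ b)
    (hγ : ContDiffOn ℝ 1 γ (Icc a b)) (hρ : LipschitzWith 1 ρ)
    (hpos : ∀ t ∈ Icc a b, 0 < ρ (γ t)) :
    2 * Real.log (1 + dist (γ a) (γ b) / (ρ (γ a) + ρ (γ b)))
      ≤ ∫ t in a..b, ‖deriv γ t‖ / ρ (γ t) := by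
  obtain ⟨c, hc, hbalance⟩ : ∃ c ∈ Icc a b,
      ρ (γ a) + dist (γ a) (γ c) = ρ (γ b) + dist (γ c) (γ b) := by
    have hγc := hγ.continuousOn
    refine isPreconnected_Icc.intermediate_value₂ (left_mem_Icc.2 hab) (right_mem_Icc.2 hab)
      (by fun_prop) (by fun_prop) ?_ ?_
    · simpa using hρ.le_add_mul (γ a) (γ b)
    · simpa [dist_comm] using hρ.le_add_mul (γ b) (γ a)
  have hleft : Icc a c ⊆ Icc a b := Icc_subset_Icc_right hc.2
  have hright : Icc c b ⊆ Icc a b := Icc_subset_Icc_left hc.1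
  have hint := intervalIntegrable_norm_deriv_div hab hγ hρ.continuous hpos
  calc 2 * Real.log (1 + dist (γ a) (γ b) / (ρ (γ a) + ρ (γ b)))
      ≤ Real.log (1 + dist (γ a) (γ c) / ρ (γ a)) + Real.log (1 + dist (γ c) (γ b) / ρ (γ b)) :=
        two_mul_log_one_add_div_add_le (hpos a (left_mem_Icc.2 hab)) (hpos b (right_mem_Icc.2 hab))
          dist_nonneg (dist_triangle _ _ _) hbalance
    _ ≤ (∫ t in a..c, ‖deriv γ t‖ / ρ (γ t)) + ∫ t in c..b, ‖deriv γ t‖ / ρ (γ t) :=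
        add_le_add
          (log_one_add_dist_div_left_le_integral hc.1 (hγ.mono hleft) hρ fun t ht ↦
            hpos t (hleft ht))
          (log_one_add_dist_div_right_le_integral hc.2 (hγ.mono hright) hρ fun t ht ↦
            hpos t (hright ht))
    _ = ∫ t in a..b, ‖deriv γ t‖ / ρ (γ t) :=
        intervalIntegral.integral_add_adjacent_intervals
          (hint.mono_set (uIcc_subset_uIcc_left (Icc_subset_uIcc hc)))
          (hint.mono_set (uIcc_subset_uIcc_right (Icc_subset_uIcc hc)))

end WeightedLength

section QuasihyperbolicDist

/-- The quasihyperbolic metric of a set `G` in a real normed space, computed along `C¹` paths.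
For `G` in a Euclidean space it is `qhDist G` by definition. -/
noncomputable def quasihyperbolicDist (G : Set E) (x y : E) : ℝ :=
  ⨅ γ : {γ : ℝ → E // γ 0 = x ∧ γ 1 = y ∧
      (∀ t ∈ Icc (0 : ℝ) 1, γ t ∈ G) ∧ ContDiffOn ℝ 1 γ (Icc 0 1)},
    ∫ t in (0 : ℝ)..1, ‖deriv γ.1 t‖ / infDist (γ.1 t) (frontier G)

theorem infDist_frontier_pos (hGo : IsOpen G) (hG : G ≠ univ) (hx : x ∈ G) :
    0 < infDist x (frontier G) :=
  (isClosed_frontier.notMem_iff_infDist_pos (nonempty_frontier_iff.2 ⟨⟨x, hx⟩, hG⟩)).1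
    fun hxf ↦ (disjoint_frontier_iff_isOpen.2 hGo).notMem_of_mem_left hxf hx

theorem two_mul_log_one_add_dist_div_add_le_quasihyperbolicDist (hGo : IsOpen G)
    (hGc : IsPreconnected G) (hG : G ≠ univ) (hx : x ∈ G) (hy : y ∈ G) :
    2 * Real.log (1 + dist x y / (infDist x (frontier G) + infDist y (frontier G)))
      ≤ quasihyperbolicDist G x y := by
  obtain ⟨γ₀, hγ₀, hγ₀G, hγ₀x, hγ₀y⟩ := smoothlyJoinedIn_of_isPreconnected hGo hGc hx hy
  have : Nonempty {γ : ℝ → E // γ 0 = x ∧ γ 1 = y ∧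
      (∀ t ∈ Icc (0 : ℝ) 1, γ t ∈ G) ∧ ContDiffOn ℝ 1 γ (Icc 0 1)} :=
    ⟨⟨γ₀, hγ₀x 0 le_rfl, hγ₀y 1 le_rfl, fun t _ ↦ hγ₀G t, (hγ₀.of_le (by simp)).contDiffOn⟩⟩
  refine le_ciInf ?_
  rintro ⟨γ, rfl, rfl, hγG, hγ⟩
  exact two_mul_log_one_add_dist_div_add_le_integral zero_le_one hγ (lipschitz_infDist_pt _)
    fun t ht ↦ infDist_frontier_pos hGo hG (hγG t ht)

end QuasihyperbolicDist

section ModulusOfContinuity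

variable {t k d S r : ℝ}

theorem two_div_two_sub_div_le_one_add_div (hd : 0 ≤ d) (hS : 0 < S) (hSd : S + d ≤ 2 * r) :
    2 / (2 - d / r) ≤ 1 + d / S := by
  have hr : 0 < r := by linarith
  calc 2 / (2 - d / r) = 2 * r / (2 * r - d) := by field_simp
    _ ≤ (S + d) / S := by
        rw [div_le_div_iff₀ (by linarith) hS]
        linarith [mul_nonneg hd (sub_nonneg.2 hSd)]
    _ = 1 + d / S := (one_add_div hS.ne').symm

theorem le_two_mul_log_two_div (ht : t < 2) : t ≤ 2 * Real.log (2 / (2 - t)) := by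
  have hlog : 1 - (2 / (2 - t))⁻¹ ≤ Real.log (2 / (2 - t)) :=
    Real.one_sub_inv_le_log_of_pos (div_pos two_pos (sub_pos.2 ht))
  rw [inv_div] at hlog
  linarith

theorem le_two_mul_one_sub_exp_of_two_mul_log_le (ht : t < 2)
    (hk : 2 * Real.log (2 / (2 - t)) ≤ k) : t ≤ 2 * (1 - Real.exp (-k / 2)) := by
  have hexp : 2 / (2 - t) ≤ Real.exp (k / 2) :=
    (Real.log_le_iff_le_exp (div_pos two_pos (sub_pos.2 ht))).1 (by linarith)
  have hinv : Real.exp (-k / 2) ≤ (2 - t) / 2 := by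
    rw [neg_div, Real.exp_neg, ← inv_div 2 (2 - t)]
    exact inv_anti₀ (div_pos two_pos (sub_pos.2 ht)) hexp
  linarith

theorem le_two_mul_sqrt_mul_self {n : ℕ} (hn : n ≠ 0) {D : ℝ} (hD : 0 ≤ D) :
    D ≤ 2 * (√((n : ℝ) / (2 * n + 2)) * D) := by
  have hn₁ : (1 : ℝ) ≤ n := Nat.one_le_cast.2 (Nat.one_le_iff_ne_zero.2 hn)
  have half_le : 1 / 2 ≤ √((n : ℝ) / (2 * n + 2)) := by
    refine Real.le_sqrt_of_sq_le ?_
    rw [le_div_iff₀ (by positivity)]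
    linarith
  linarith [mul_le_mul_of_nonneg_right half_le hD]

end ModulusOfContinuity

theorem stmt_9_general (hGo : IsOpen G) (hGc : IsPreconnected G) (hGb : Bornology.IsBounded G)
    {r : ℝ} (hr : diam G ≤ 2 * r) (hx : x ∈ G) (hy : y ∈ G) (hxy : x ≠ y)
    {t : ℝ} (ht : t = dist x y / r) :
    2 * Real.log (2 / (2 - t)) ≤ quasihyperbolicDist G x y ∧
    t ≤ 2 * Real.log (2 / (2 - t)) ∧
    dist x y ≤ 2 * r * (1 - Real.exp (-(quasihyperbolicDist G x y) / 2)) := by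
  have : Nontrivial E := ⟨x, y, hxy⟩
  have hG : G ≠ univ := fun h ↦ NormedSpace.unbounded_univ ℝ E (h ▸ hGb)
  set d := dist x y
  set S := infDist x (frontier G) + infDist y (frontier G)
  have hd : 0 < d := dist_pos.2 hxy
  have hS : 0 < S := add_pos (infDist_frontier_pos hGo hG hx) (infDist_frontier_pos hGo hG hy)
  have hSd : S + d ≤ 2 * r := by
    linarith [infDist_frontier_add_dist_add_infDist_frontier_le_diam hGb (subset_closure hx)
      (subset_closure hy) hxy]
  have hr₀ : 0 < r := by linarith
  have ht₂ : t < 2 := by rw [ht, div_lt_iff₀ hr₀]; linarith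
  have hlower : 2 * Real.log (2 / (2 - t)) ≤ quasihyperbolicDist G x y := by
    refine le_trans ?_ (two_mul_log_one_add_dist_div_add_le_quasihyperbolicDist hGo hGc hG hx hy)
    gcongr
    exact ht ▸ two_div_two_sub_div_le_one_add_div hd.le hS hSd
  refine ⟨hlower, le_two_mul_log_two_div ht₂, ?_⟩
  calc d = r * t := by rw [ht, mul_div_cancel₀ _ hr₀.ne']
    _ ≤ r * (2 * (1 - Real.exp (-(quasihyperbolicDist G x y) / 2))) := by
        gcongr
        exact le_two_mul_one_sub_exp_of_two_mul_log_le ht₂ hlower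
    _ = 2 * r * (1 - Real.exp (-(quasihyperbolicDist G x y) / 2)) := by ring

theorem stmt_9 (n : ℕ) (G : Set (EuclideanSpace ℝ (Fin n)))
    (hGo : IsOpen G) (hGc : IsConnected G) (hGp : G ≠ Set.univ)
    (hGb : Bornology.IsBounded G)
    (r : ℝ) (hr : r = Real.sqrt ((n : ℝ) / (2 * n + 2)) * Metric.diam G)
    (x y : EuclideanSpace ℝ (Fin n)) (hx : x ∈ G) (hy : y ∈ G) (hxy : x ≠ y)
    (t : ℝ) (ht : t = dist x y / r) :
    2 * Real.log (2 / (2 - t)) ≤ qhDist G x y ∧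
    t ≤ 2 * Real.log (2 / (2 - t)) ∧
    dist x y ≤ 2 * r * (1 - Real.exp (-(qhDist G x y) / 2)) := by
  have hn : n ≠ 0 := by
    rintro rfl
    exact hxy (Subsingleton.elim x y)
  exact stmt_9_general hGo hGc.isPreconnected hGb (hr ▸ le_two_mul_sqrt_mul_self hn diam_nonneg)
    hx hy hxy ht
end
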